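/- arXiv:0802.0023 — 4 statements merged into one kernel-verified Lean document; each statement's English description precedes it below -/
import Mathlib

section
/- If the non-negative measures σ_{k,l}, k ∈ ℕ₀, l = 1,…,a_k, all have support in a compact interval [ρ,R] ⊂ [0,∞) and satisfy Σ_{k=0}^∞ Σ_{l=1}^{a_k} ∫_ρ^R r^{-k} dσ_{k,l}(r) < ∞, then the representing pseudo-positive signed measure σ of the functional T(f) := Σ_{k=0}^{deg f} Σ_{l=1}^{a_k} ∫_0^∞ f_{k,l}(r) r^{-k} dσ_{k,l}(r) can be chosen with support contained in the annulus {x ∈ ℝ^d : ρ ≤ |x| ≤ R}. -/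
open MeasureTheory MvPolynomial Metric
open scoped ComplexOrder ENNReal

noncomputable section

/-- `d`-dimensional Euclidean space. -/
abbrev E (d : ℕ) := EuclideanSpace ℝ (Fin d)

/-- The (surface) measure `dθ` on the unit sphere `S^{d-1}`. -/
noncomputable def sphMeas (d : ℕ) : Measure (sphere (0 : E d) 1) :=
  (volume : Measure (E d)).toSphere

/-- A bundled orthonormal basis `Y_{k,l}`, `l = 1,…,a_k`, of the spaces `H_k(ℝ^d)` of
real-valued harmonic polynomials homogeneous of degree `k`, orthonormal with respect to
`⟨f,g⟩ = ∫_{S^{d-1}} f g dθ`. -/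
structure HarmonicBasis (d : ℕ) where
  a : ℕ → ℕ
  Y : (k : ℕ) → Fin (a k) → MvPolynomial (Fin d) ℝ
  harmonic : ∀ k l, (∑ i, pderiv i (pderiv i (Y k l))) = 0
  homogeneous : ∀ k l, (Y k l).IsHomogeneous k
  orthonormal : ∀ (k k' : ℕ) (l : Fin (a k)) (l' : Fin (a k')),
    (∫ θ : sphere (0 : E d) 1,
        (eval (fun i => (θ : E d) i) (Y k l)) * (eval (fun i => (θ : E d) i) (Y k' l'))
      ∂(sphMeas d)) = if k = k' ∧ (l : ℕ) = (l' : ℕ) then 1 else 0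
  complete : ∀ (k : ℕ) (P : MvPolynomial (Fin d) ℝ),
    (∑ i, pderiv i (pderiv i P)) = 0 → P.IsHomogeneous k →
      P ∈ Submodule.span ℝ (Set.range (Y k))

/-- Evaluation of a complex polynomial in `d` variables at a point of `ℝ^d`. -/
def evalC {d : ℕ} (P : MvPolynomial (Fin d) ℂ) (x : E d) : ℂ :=
  eval (fun i => (x i : ℂ)) P

/-- The polynomial `|x|² = x₁² + … + x_d²`. -/
def normSqP (d : ℕ) : MvPolynomial (Fin d) ℂ := ∑ i, X i ^ 2

/-- Integral of a (complex- or real-valued) function with respect to a signed measure,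
via the Jordan decomposition. -/
noncomputable def sInt {α : Type*} {G : Type*} [MeasurableSpace α] [NormedAddCommGroup G]
    [NormedSpace ℝ G] (μ : SignedMeasure α) (f : α → G) : G :=
  (∫ x, f x ∂μ.toJordanDecomposition.posPart) - ∫ x, f x ∂μ.toJordanDecomposition.negPart

/-- A signed measure is a moment measure if every polynomial is integrable with respect to
its total variation. -/
def IsMomentMeasure {d : ℕ} (μ : SignedMeasure (E d)) : Prop :=
  ∀ P : MvPolynomial (Fin d) ℂ, Integrable (evalC P) μ.totalVariation

namespace HarmonicBasis

variable {d : ℕ} (B : HarmonicBasis d)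

/-- `Y_{k,l}` as a function on `ℝ^d`. -/
def Yf (k : ℕ) (l : Fin (B.a k)) (x : E d) : ℝ := eval (fun i => x i) (B.Y k l)

/-- `Y_{k,l}` as a complex polynomial. -/
def YC (k : ℕ) (l : Fin (B.a k)) : MvPolynomial (Fin d) ℂ :=
  (B.Y k l).map (algebraMap ℝ ℂ)

/-- The Laplace–Fourier coefficient `f_{k,l}(r) = ∫_{S^{d-1}} f(rθ) Y_{k,l}(θ) dθ`. -/
noncomputable def lfCoeff (f : E d → ℂ) (k : ℕ) (l : Fin (B.a k)) (r : ℝ) : ℂ :=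
  ∫ θ : sphere (0 : E d) 1, f (r • (θ : E d)) * (B.Yf k l (θ : E d) : ℂ) ∂(sphMeas d)

/-- `GaussDecomp B f K p` : `p` is a Gauss (Laplace–Fourier) decomposition of the polynomial
`f`, i.e. `f(x) = ∑_{k=0}^{K} ∑_{l=1}^{a_k} p_{k,l}(|x|²) Y_{k,l}(x)` with `p_{k,l} = 0` for
`k > K`. -/
def GaussDecomp (f : MvPolynomial (Fin d) ℂ) (K : ℕ)
    (p : (k : ℕ) → Fin (B.a k) → Polynomial ℂ) : Prop :=
  (∀ k, K < k → ∀ l, p k l = 0) ∧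
    f = ∑ k ∈ Finset.range (K + 1), ∑ l,
      Polynomial.aeval (normSqP d) (p k l) * B.YC k l

/-- The component functional `T_{k,l}(p) = T(p(|x|²) Y_{k,l}(x))`. -/
def component (T : MvPolynomial (Fin d) ℂ → ℂ) (k : ℕ) (l : Fin (B.a k))
    (p : Polynomial ℂ) : ℂ :=
  T (Polynomial.aeval (normSqP d) p * B.YC k l)

/-- A functional `T` on `ℂ[x₁,…,x_d]` is pseudo-positive definite (w.r.t. the basis `Y_{k,l}`)
if `T_{k,l}(p* p) ≥ 0` and `T_{k,l}(t · p*(t) p(t)) ≥ 0` for all univariate `p` and all `k, l`. -/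
def PPD (T : MvPolynomial (Fin d) ℂ → ℂ) : Prop :=
  ∀ (k : ℕ) (l : Fin (B.a k)) (p : Polynomial ℂ),
    0 ≤ B.component T k l (p.map (starRingEnd ℂ) * p) ∧
    0 ≤ B.component T k l (Polynomial.X * (p.map (starRingEnd ℂ) * p))

/-- A signed measure `μ` on `ℝ^d` is pseudo-positive (w.r.t. the basis `Y_{k,l}`) if
`∫ h(|x|) Y_{k,l}(x) dμ ≥ 0` for every non-negative continuous compactly supported `h`. -/
def PseudoPositive (μ : SignedMeasure (E d)) : Prop :=
  ∀ (k : ℕ) (l : Fin (B.a k)) (h : ℝ → ℝ), Continuous h → HasCompactSupport h →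
    (∀ t, 0 ≤ h t) → 0 ≤ sInt μ (fun x => h ‖x‖ * B.Yf k l x)

/-- `ν` is the family of component measures `μ_{k,l}` of the signed measure `μ`, i.e.
`∫_0^∞ h dμ_{k,l} = ∫_{ℝ^d} h(|x|) Y_{k,l}(x) dμ` for all continuous compactly supported `h`. -/
def IsComponentFamily (μ : SignedMeasure (E d))
    (ν : (k : ℕ) → Fin (B.a k) → Measure ℝ) : Prop :=
  ∀ k l, (ν k l) (Set.Iio 0) = 0 ∧
    ∀ h : ℝ → ℝ, Continuous h → HasCompactSupport h →
      ∫ t, h t ∂(ν k l) = sInt μ (fun x => h ‖x‖ * B.Yf k l x)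

/-- The summability condition `C_N = ∑_{k,l} ∫_0^∞ r^N r^{-k} dσ_{k,l}(r) < ∞` for all `N`. -/
def SummCond (σ : (k : ℕ) → Fin (B.a k) → Measure ℝ) : Prop :=
  ∀ N : ℕ, (∑' k : ℕ, ∑ l, ∫⁻ r, (ENNReal.ofReal r) ^ N * ((ENNReal.ofReal r) ^ k)⁻¹
    ∂(σ k l)) < ⊤

end HarmonicBasis

/-- The set `W_τ^{Sti}` of all non-negative moment measures on `[0,∞)` having the same
moments as `τ`. -/
def WSti (τ : Measure ℝ) : Set (Measure ℝ) :=
  {ρ | ρ (Set.Iio 0) = 0 ∧ (∀ m : ℕ, Integrable (fun t => t ^ m) ρ) ∧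
    ∀ m : ℕ, ∫ t, t ^ m ∂ρ = ∫ t, t ^ m ∂τ}

/-- A measure `ν` on `[0,∞)` is determined in the sense of Stieltjes if it is the only
non-negative measure on `[0,∞)` with its moments. -/
def StieltjesDeterminate (ν : Measure ℝ) : Prop :=
  ∀ τ : Measure ℝ, τ ∈ WSti ν → τ = ν

/-! ### Integration against a difference of finite measures -/

lemma sInt_sub_toSignedMeasure {α G : Type*} [MeasurableSpace α] [NormedAddCommGroup G]
    [NormedSpace ℝ G] (P N : Measure α) [IsFiniteMeasure P] [IsFiniteMeasure N]
    {f : α → G} (hP : Integrable f P) (hN : Integrable f N) :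
    sInt (P.toSignedMeasure - N.toSignedMeasure) f = ∫ x, f x ∂P - ∫ x, f x ∂N := by
  unfold sInt
  rw [Measure.toJordanDecomposition_toSignedMeasure_sub,
    Measure.jordanDecompositionOfToSignedMeasureSub_posPart,
    Measure.jordanDecompositionOfToSignedMeasureSub_negPart]
  have key : P + (N - P) = N + (P - N) := by
    have h := Measure.sub_toSignedMeasure_eq_toSignedMeasure_sub (μ := P) (ν := N)
    rw [sub_eq_sub_iff_add_eq_add] at h
    rw [← Measure.toSignedMeasure_add, ← Measure.toSignedMeasure_add] at h
    have h2 := (Measure.toSignedMeasure_eq_toSignedMeasure_iff).1 h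
    rw [h2, add_comm]
  have i1 : Integrable f (P - N) := hP.mono_measure Measure.sub_le
  have i2 : Integrable f (N - P) := hN.mono_measure Measure.sub_le
  have := congrArg (fun m => ∫ x, f x ∂m) key
  rw [integral_add_measure hP i2, integral_add_measure hN i1] at this
  rw [sub_eq_sub_iff_add_eq_add, add_comm, ← this, add_comm]

lemma totalVariation_sub_le {α : Type*} [MeasurableSpace α]
    (P N : Measure α) [IsFiniteMeasure P] [IsFiniteMeasure N] :
    (P.toSignedMeasure - N.toSignedMeasure).totalVariation ≤ P + N := by
  unfold SignedMeasure.totalVariation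
  rw [Measure.toJordanDecomposition_toSignedMeasure_sub,
    Measure.jordanDecompositionOfToSignedMeasureSub_posPart,
    Measure.jordanDecompositionOfToSignedMeasureSub_negPart]
  exact add_le_add Measure.sub_le Measure.sub_le

lemma eval_smul_of_homogeneous {d k : ℕ} {P : MvPolynomial (Fin d) ℝ} (hP : P.IsHomogeneous k)
    (r : ℝ) (x : Fin d → ℝ) :
    eval (fun i => r * x i) P = r ^ k * eval x P := by
  rw [eval_eq, eval_eq, Finset.mul_sum]
  refine Finset.sum_congr rfl fun m hm => ?_
  have hk : ∑ i ∈ m.support, m i = k := by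
    have := hP (mem_support_iff.1 hm)
    rw [← this, Finsupp.weight_apply, Finsupp.sum]
    simp
  simp_rw [mul_pow]
  rw [Finset.prod_mul_distrib, Finset.prod_pow_eq_pow_sum, hk]
  ring

lemma integrable_of_closedBall {d : ℕ} {G : Type*} [NormedAddCommGroup G]
    {f : E d → G} (hf : Continuous f) (P : Measure (E d)) [IsFiniteMeasure P] (R : ℝ)
    (hP : ∀ᵐ x ∂P, ‖x‖ ≤ R) : Integrable f P := by
  obtain ⟨C, hC⟩ := (isCompact_closedBall (0 : E d) R).exists_bound_of_continuousOn
    hf.continuousOn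
  refine Integrable.of_bound hf.aestronglyMeasurable C ?_
  filter_upwards [hP] with x hx
  exact hC x (by simpa using hx)

lemma evalC_continuous {d : ℕ} (P : MvPolynomial (Fin d) ℂ) : Continuous (evalC P) := by
  unfold evalC
  exact (MvPolynomial.continuous_eval P).comp (by fun_prop)

instance sphMeas_finite (d : ℕ) : IsFiniteMeasure (sphMeas d) := by
  unfold sphMeas; infer_instance

namespace HarmonicBasis

variable {d : ℕ} (B : HarmonicBasis d)

lemma Yf_continuous (k : ℕ) (l : Fin (B.a k)) : Continuous (B.Yf k l) := by
  unfold Yf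
  exact (MvPolynomial.continuous_eval (B.Y k l)).comp (by fun_prop)

lemma Yf_smul (k : ℕ) (l : Fin (B.a k)) (r : ℝ) (x : E d) :
    B.Yf k l (r • x) = r ^ k * B.Yf k l x := by
  unfold Yf
  exact eval_smul_of_homogeneous (B.homogeneous k l) r _

/-- `Y_{k,l}` on the sphere. -/
def Ys (i : Σ k, Fin (B.a k)) (θ : sphere (0 : E d) 1) : ℝ := B.Yf i.1 i.2 (θ : E d)

lemma Ys_continuous (i : Σ k, Fin (B.a k)) : Continuous (B.Ys i) :=
  (B.Yf_continuous i.1 i.2).comp continuous_subtype_val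

lemma integrable_sphere {f : sphere (0 : E d) 1 → ℝ} (hf : Continuous f) :
    Integrable f (sphMeas d) :=
  hf.integrable_of_hasCompactSupport (HasCompactSupport.of_compactSpace f)

open Classical in
lemma Ys_orth (i j : Σ k, Fin (B.a k)) :
    ∫ θ, B.Ys i θ * B.Ys j θ ∂(sphMeas d) = if i = j then 1 else 0 := by
  have h := B.orthonormal i.1 j.1 i.2 j.2
  unfold Ys Yf
  rw [h]
  congr 1
  obtain ⟨k, l⟩ := i
  obtain ⟨k', l'⟩ := j
  simp only [eq_iff_iff]
  constructor
  · rintro ⟨h1, h2⟩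
    subst h1
    rw [Fin.ext h2]
  · intro h
    cases h
    simp

/-- Spherical measure with density the positive part of `s * Y_i`. -/
def om (s : ℝ) (i : Σ k, Fin (B.a k)) : Measure (sphere (0 : E d) 1) :=
  (sphMeas d).withDensity (fun θ => ENNReal.ofReal (s * B.Ys i θ))

instance om_finite (s : ℝ) (i : Σ k, Fin (B.a k)) : IsFiniteMeasure (B.om s i) :=
  isFiniteMeasure_withDensity_ofReal
    (integrable_sphere (continuous_const.mul (B.Ys_continuous i))).hasFiniteIntegral

lemma om_univ_le (s : ℝ) (hs : s ^ 2 = 1) (i : Σ k, Fin (B.a k)) :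
    B.om s i Set.univ ≤ ENNReal.ofReal ((sphMeas d).real Set.univ + 1) := by
  have hc : Continuous (fun θ => 1 + B.Ys i θ * B.Ys i θ) := by
    have := B.Ys_continuous i
    fun_prop
  calc B.om s i Set.univ = ∫⁻ θ, ENNReal.ofReal (s * B.Ys i θ) ∂(sphMeas d) := by
        simp [om]
    _ ≤ ∫⁻ θ, ENNReal.ofReal (1 + B.Ys i θ * B.Ys i θ) ∂(sphMeas d) := by
        refine lintegral_mono fun θ => ENNReal.ofReal_le_ofReal ?_
        nlinarith [sq_nonneg (s - B.Ys i θ), mul_self_nonneg (B.Ys i θ)]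
    _ = ENNReal.ofReal (∫ θ, (1 + B.Ys i θ * B.Ys i θ) ∂(sphMeas d)) := by
        rw [ofReal_integral_eq_lintegral_ofReal (integrable_sphere hc)]
        exact Filter.Eventually.of_forall fun θ => add_nonneg zero_le_one (mul_self_nonneg (B.Ys i θ))
    _ = _ := by
        have hi : Integrable (fun θ => B.Ys i θ * B.Ys i θ) (sphMeas d) :=
          integrable_sphere ((B.Ys_continuous i).mul (B.Ys_continuous i))
        rw [integral_add (integrable_const _) hi, B.Ys_orth]
        simp

lemma integral_om (s : ℝ) (i j : Σ k, Fin (B.a k)) :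
    ∫ θ, B.Ys i θ ∂(B.om s j) = ∫ θ, max (s * B.Ys j θ) 0 * B.Ys i θ ∂(sphMeas d) := by
  unfold om
  rw [integral_withDensity_eq_integral_toReal_smul]
  · simp [ENNReal.toReal_ofReal']
  · exact ((continuous_const.mul (B.Ys_continuous j)).measurable).ennreal_ofReal
  · simp

open Classical in
lemma integral_om_sub (i j : Σ k, Fin (B.a k)) :
    ∫ θ, B.Ys i θ ∂(B.om 1 j) - ∫ θ, B.Ys i θ ∂(B.om (-1) j) = if i = j then 1 else 0 := by
  have hi := B.Ys_continuous i
  have hj := B.Ys_continuous j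
  rw [integral_om, integral_om, ← B.Ys_orth i j, ← integral_sub]
  · refine integral_congr_ae (Filter.Eventually.of_forall fun θ => ?_)
    simp only [one_mul, neg_mul]
    rcases le_total 0 (B.Ys j θ) with h | h
    · rw [max_eq_left h, max_eq_right (by linarith)]; ring
    · rw [max_eq_right h, max_eq_left (by linarith)]; ring
  · exact integrable_sphere (by fun_prop)
  · exact integrable_sphere (by fun_prop)

section Construction

variable (σ : (k : ℕ) → Fin (B.a k) → Measure ℝ)

/-- The radial measure `r^{-k} dσ_{k,l}(r)`. -/
def tau (i : Σ k, Fin (B.a k)) : Measure ℝ :=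
  (σ i.1 i.2).withDensity (fun r => ((ENNReal.ofReal r) ^ i.1)⁻¹)

lemma tau_univ (i : Σ k, Fin (B.a k)) :
    B.tau σ i Set.univ = ∫⁻ r, ((ENNReal.ofReal r) ^ i.1)⁻¹ ∂(σ i.1 i.2) := by
  simp [tau]

lemma tau_sum : ∑' i, B.tau σ i Set.univ =
    ∑' k : ℕ, ∑ l, ∫⁻ r, ((ENNReal.ofReal r) ^ k)⁻¹ ∂(σ k l) := by
  rw [ENNReal.tsum_sigma']
  simp_rw [tau_univ, tsum_fintype]

/-- The pieces of the positive/negative part. -/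
def piece (s : ℝ) (i : Σ k, Fin (B.a k)) : Measure (E d) :=
  ((B.om s i).prod (B.tau σ i)).map (fun z => z.2 • (z.1 : E d))

/-- The positive (`s = 1`) and negative (`s = -1`) parts. -/
def mes (s : ℝ) : Measure (E d) := Measure.sum (B.piece σ s)

lemma tau_finite
    (hsum : (∑' k : ℕ, ∑ l, ∫⁻ r, ((ENNReal.ofReal r) ^ k)⁻¹ ∂(σ k l)) < ⊤) (i : Σ k, Fin (B.a k)) : IsFiniteMeasure (B.tau σ i) := by
  constructor
  rw [← B.tau_sum σ] at hsum
  exact (ENNReal.le_tsum i).trans_lt hsum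

lemma measurable_polar : Measurable (fun z : sphere (0 : E d) 1 × ℝ => z.2 • (z.1 : E d)) := by
  fun_prop

lemma mes_finite
    (hsum : (∑' k : ℕ, ∑ l, ∫⁻ r, ((ENNReal.ofReal r) ^ k)⁻¹ ∂(σ k l)) < ⊤) (s : ℝ) (hs : s ^ 2 = 1) : IsFiniteMeasure (B.mes σ s) := by
  constructor
  unfold mes
  rw [Measure.sum_apply _ MeasurableSet.univ]
  have h : ∀ i, B.piece σ s i Set.univ ≤
      ENNReal.ofReal ((sphMeas d).real Set.univ + 1) * B.tau σ i Set.univ := by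
    intro i
    have := B.tau_finite σ hsum i
    unfold piece
    rw [Measure.map_apply measurable_polar MeasurableSet.univ, Set.preimage_univ,
      ← Set.univ_prod_univ, Measure.prod_prod]
    gcongr
    exact B.om_univ_le s hs i
  refine (ENNReal.tsum_le_tsum h).trans_lt ?_
  rw [ENNReal.tsum_mul_left, B.tau_sum σ]
  exact ENNReal.mul_lt_top ENNReal.ofReal_lt_top hsum

variable {ρ R : ℝ}

lemma tau_supp
    (hsupp : ∀ k l, (σ k l) ((Set.Icc ρ R)ᶜ) = 0) (i : Σ k, Fin (B.a k)) : ∀ᵐ r ∂(B.tau σ i), r ∈ Set.Icc ρ R := by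
  have h : ∀ᵐ r ∂(σ i.1 i.2), r ∈ Set.Icc ρ R := by
    rw [ae_iff]; exact hsupp i.1 i.2
  exact (withDensity_absolutelyContinuous _ _).ae_le h

lemma prod_supp
    (hsum : (∑' k : ℕ, ∑ l, ∫⁻ r, ((ENNReal.ofReal r) ^ k)⁻¹ ∂(σ k l)) < ⊤)
    (hsupp : ∀ k l, (σ k l) ((Set.Icc ρ R)ᶜ) = 0) (s : ℝ) (i : Σ k, Fin (B.a k)) :
    ∀ᵐ z ∂((B.om s i).prod (B.tau σ i)), z.2 ∈ Set.Icc ρ R := by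
  have := B.tau_finite σ hsum i
  exact Measure.quasiMeasurePreserving_snd.ae (B.tau_supp σ hsupp i)

lemma measurableSet_annulus : MeasurableSet {x : E d | ρ ≤ ‖x‖ ∧ ‖x‖ ≤ R} := by
  measurability

lemma mes_supp
    (hsum : (∑' k : ℕ, ∑ l, ∫⁻ r, ((ENNReal.ofReal r) ^ k)⁻¹ ∂(σ k l)) < ⊤)
    (hsupp : ∀ k l, (σ k l) ((Set.Icc ρ R)ᶜ) = 0) (hρ : 0 ≤ ρ) (s : ℝ) :
    B.mes σ s {x : E d | ρ ≤ ‖x‖ ∧ ‖x‖ ≤ R}ᶜ = 0 := by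
  unfold mes
  rw [Measure.sum_apply _ measurableSet_annulus.compl, ENNReal.tsum_eq_zero]
  intro i
  unfold piece
  rw [Measure.map_apply measurable_polar measurableSet_annulus.compl]
  have h := B.prod_supp σ hsum hsupp s i
  refine measure_mono_null ?_ (ae_iff.1 h)
  intro z hz hz2
  apply hz
  have h0 : 0 ≤ z.2 := hρ.trans hz2.1
  simpa [norm_smul, abs_of_nonneg h0] using hz2

lemma mes_norm_le
    (hsum : (∑' k : ℕ, ∑ l, ∫⁻ r, ((ENNReal.ofReal r) ^ k)⁻¹ ∂(σ k l)) < ⊤)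
    (hsupp : ∀ k l, (σ k l) ((Set.Icc ρ R)ᶜ) = 0) (hρ : 0 ≤ ρ) (s : ℝ) : ∀ᵐ x ∂(B.mes σ s), ‖x‖ ≤ R := by
  refine measure_mono_null ?_ (B.mes_supp σ hsum hsupp hρ s)
  intro x hx h
  exact hx h.2

lemma integral_tau
    (hsum : (∑' k : ℕ, ∑ l, ∫⁻ r, ((ENNReal.ofReal r) ^ k)⁻¹ ∂(σ k l)) < ⊤)
    (hsupp : ∀ k l, (σ k l) ((Set.Icc ρ R)ᶜ) = 0) {G : Type*} [NormedAddCommGroup G] [NormedSpace ℝ G] (hρ : 0 ≤ ρ)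
    (i : Σ k, Fin (B.a k)) (g : ℝ → G) :
    ∫ r, r ^ i.1 • g r ∂(B.tau σ i) = ∫ r, g r ∂(σ i.1 i.2) := by
  have hm : Measurable (fun r => ((ENNReal.ofReal r) ^ i.1)⁻¹) := by fun_prop
  have hfin : ∀ᵐ r ∂(σ i.1 i.2), ((ENNReal.ofReal r) ^ i.1)⁻¹ < ⊤ := by
    refine ae_lt_top hm ?_
    rw [← tau_univ]
    have := B.tau_finite σ hsum i
    exact measure_ne_top _ _
  have h : ∀ᵐ r ∂(σ i.1 i.2), r ∈ Set.Icc ρ R := by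
    rw [ae_iff]; exact hsupp i.1 i.2
  unfold tau
  rw [integral_withDensity_eq_integral_toReal_smul hm hfin]
  refine integral_congr_ae ?_
  filter_upwards [h, hfin] with r hr hr2
  have h0 : 0 ≤ r := hρ.trans hr.1
  have hne : r ^ i.1 ≠ 0 := by
    intro h
    rw [← ENNReal.ofReal_pow h0, h] at hr2
    simp at hr2
  rw [ENNReal.toReal_inv, ENNReal.toReal_pow, ENNReal.toReal_ofReal h0, smul_smul,
    inv_mul_cancel₀ hne, one_smul]

lemma integral_piece
    (hsum : (∑' k : ℕ, ∑ l, ∫⁻ r, ((ENNReal.ofReal r) ^ k)⁻¹ ∂(σ k l)) < ⊤)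
    (hsupp : ∀ k l, (σ k l) ((Set.Icc ρ R)ᶜ) = 0) {G : Type*} [NormedAddCommGroup G] [NormedSpace ℝ G] (hρ : 0 ≤ ρ)
    (s : ℝ) (i j : Σ k, Fin (B.a k)) (g : ℝ → G) (hg : Continuous g) :
    ∫ x, B.Yf i.1 i.2 x • g ‖x‖ ∂(B.piece σ s j) =
      (∫ θ, B.Ys i θ ∂(B.om s j)) • ∫ r, r ^ i.1 • g r ∂(B.tau σ j) := by
  have := B.tau_finite σ hsum j
  have hc : Continuous (fun x : E d => B.Yf i.1 i.2 x • g ‖x‖) :=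
    (B.Yf_continuous i.1 i.2).smul (hg.comp continuous_norm)
  unfold piece
  rw [integral_map measurable_polar.aemeasurable hc.aestronglyMeasurable, ← integral_prod_smul]
  refine integral_congr_ae ?_
  filter_upwards [B.prod_supp σ hsum hsupp s j] with z hz
  have h0 : 0 ≤ z.2 := hρ.trans hz.1
  have hn : ‖z.2 • (z.1 : E d)‖ = z.2 := by
    simp [norm_smul, abs_of_nonneg h0]
  rw [hn, B.Yf_smul, smul_smul, mul_comm]
  rfl

lemma main_integral
    (hsum : (∑' k : ℕ, ∑ l, ∫⁻ r, ((ENNReal.ofReal r) ^ k)⁻¹ ∂(σ k l)) < ⊤)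
    (hsupp : ∀ k l, (σ k l) ((Set.Icc ρ R)ᶜ) = 0) {G : Type*} [NormedAddCommGroup G] [NormedSpace ℝ G] (hρ : 0 ≤ ρ)
    (i : Σ k, Fin (B.a k)) (g : ℝ → G) (hg : Continuous g) :
    ∫ x, B.Yf i.1 i.2 x • g ‖x‖ ∂(B.mes σ 1) - ∫ x, B.Yf i.1 i.2 x • g ‖x‖ ∂(B.mes σ (-1))
      = ∫ r, g r ∂(σ i.1 i.2) := by
  classical
  have hc : Continuous (fun x : E d => B.Yf i.1 i.2 x • g ‖x‖) :=
    (B.Yf_continuous i.1 i.2).smul (hg.comp continuous_norm)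
  have f1 := B.mes_finite σ hsum 1 (by norm_num)
  have f2 := B.mes_finite σ hsum (-1) (by norm_num)
  have i1 := integrable_of_closedBall hc _ R (B.mes_norm_le σ hsum hsupp hρ 1)
  have i2 := integrable_of_closedBall hc _ R (B.mes_norm_le σ hsum hsupp hρ (-1))
  have s1 := hasSum_integral_measure (μ := B.piece σ 1) i1
  have s2 := hasSum_integral_measure (μ := B.piece σ (-1)) i2
  have s3 := s1.sub s2
  have s4 : ∀ j, ∫ x, B.Yf i.1 i.2 x • g ‖x‖ ∂(B.piece σ 1 j) -
      ∫ x, B.Yf i.1 i.2 x • g ‖x‖ ∂(B.piece σ (-1) j) =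
      if j = i then ∫ r, g r ∂(σ i.1 i.2) else 0 := by
    intro j
    rw [B.integral_piece σ hsum hsupp hρ 1 i j g hg,
      B.integral_piece σ hsum hsupp hρ (-1) i j g hg, ← sub_smul, B.integral_om_sub]
    by_cases h : j = i
    · subst h
      simp [B.integral_tau σ hsum hsupp hρ]
    · simp [h, Ne.symm h]
  simp_rw [s4] at s3
  exact s3.unique (hasSum_ite_eq i _)

end Construction

lemma evalC_aeval_mul (k : ℕ) (l : Fin (B.a k)) (p : Polynomial ℂ) (x : E d) :
    evalC (Polynomial.aeval (normSqP d) p * B.YC k l) x =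
      B.Yf k l x • p.eval ((‖x‖ : ℂ) ^ 2) := by
  have h1 : eval (fun i => (x i : ℂ)) (B.YC k l) = (B.Yf k l x : ℂ) := by
    unfold YC Yf
    rw [eval_map, eval₂_eq', eval_eq']
    simp
  have h2 : eval (fun i => (x i : ℂ)) (Polynomial.aeval (normSqP d) p)
      = p.eval ((‖x‖ : ℂ) ^ 2) := by
    have h3 : eval (fun i => (x i : ℂ)) (normSqP d) = (‖x‖ : ℂ) ^ 2 := by
      rw [← Complex.ofReal_pow, EuclideanSpace.norm_sq_eq]
      simp [normSqP]
    rw [Polynomial.aeval_def, Polynomial.hom_eval₂, h3, Polynomial.eval, Polynomial.eval₂_congr]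
    · ext z
      simp
    · rfl
    · rfl
  unfold evalC
  rw [map_mul, h1, h2, Complex.real_smul, mul_comm]

end HarmonicBasis

theorem statement5 {d : ℕ} (hd : 1 ≤ d) (B : HarmonicBasis d)
    (ρ R : ℝ) (hρ : 0 ≤ ρ) (hρR : ρ ≤ R)
    (σ : (k : ℕ) → Fin (B.a k) → Measure ℝ)
    (hsupp : ∀ k l, (σ k l) ((Set.Icc ρ R)ᶜ) = 0)
    (hsum : (∑' k : ℕ, ∑ l, ∫⁻ r, ((ENNReal.ofReal r) ^ k)⁻¹ ∂(σ k l)) < ⊤) :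
    ∃ μ : SignedMeasure (E d), B.PseudoPositive μ ∧ IsMomentMeasure μ ∧
      μ.totalVariation {x : E d | ρ ≤ ‖x‖ ∧ ‖x‖ ≤ R}ᶜ = 0 ∧
      ∀ (f : MvPolynomial (Fin d) ℂ) (K : ℕ) (p : (k : ℕ) → Fin (B.a k) → Polynomial ℂ),
        B.GaussDecomp f K p →
        (∑ k ∈ Finset.range (K + 1), ∑ l, ∫ r, (p k l).eval ((r : ℂ) ^ 2) ∂(σ k l))
          = sInt μ (evalC f) := by
  have f1 := B.mes_finite σ hsum 1 (by norm_num)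
  have f2 := B.mes_finite σ hsum (-1) (by norm_num)
  have n1 := B.mes_norm_le σ hsum hsupp hρ 1
  have n2 := B.mes_norm_le σ hsum hsupp hρ (-1)
  refine ⟨(B.mes σ 1).toSignedMeasure - (B.mes σ (-1)).toSignedMeasure, ?_, ?_, ?_, ?_⟩
  · intro k l h hc _ hpos
    have hcc : Continuous (fun x : E d => h ‖x‖ * B.Yf k l x) :=
      (hc.comp continuous_norm).mul (B.Yf_continuous k l)
    rw [sInt_sub_toSignedMeasure _ _ (integrable_of_closedBall hcc _ R n1)
      (integrable_of_closedBall hcc _ R n2)]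
    have := B.main_integral σ hsum hsupp hρ ⟨k, l⟩ h hc
    simp only [smul_eq_mul, mul_comm (B.Yf k l _)] at this
    rw [this]
    exact integral_nonneg hpos
  · intro P
    refine Integrable.mono_measure ?_ (totalVariation_sub_le _ _)
    exact (integrable_of_closedBall (evalC_continuous P) _ R n1).add_measure
      (integrable_of_closedBall (evalC_continuous P) _ R n2)
  · refine le_antisymm ((totalVariation_sub_le _ _ _).trans ?_) zero_le
    rw [Measure.add_apply, B.mes_supp σ hsum hsupp hρ, B.mes_supp σ hsum hsupp hρ, add_zero]
  · rintro f K p ⟨-, hf⟩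
    rw [sInt_sub_toSignedMeasure _ _ (integrable_of_closedBall (evalC_continuous f) _ R n1)
      (integrable_of_closedBall (evalC_continuous f) _ R n2)]
    have hfe : evalC f = fun x => ∑ k ∈ Finset.range (K + 1), ∑ l,
        B.Yf k l x • (p k l).eval ((‖x‖ : ℂ) ^ 2) := by
      funext x
      simp_rw [← B.evalC_aeval_mul]
      rw [hf]
      simp [evalC]
    have hg : ∀ k l, Continuous (fun r : ℝ => (p k l).eval ((r : ℂ) ^ 2)) := fun k l =>
      (p k l).continuous.comp (by fun_prop)
    have hc : ∀ k l, Continuous (fun x : E d => B.Yf k l x • (p k l).eval ((‖x‖ : ℂ) ^ 2)) :=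
      fun k l => (B.Yf_continuous k l).smul ((hg k l).comp continuous_norm)
    have hint : ∀ P : Measure (E d), IsFiniteMeasure P → (∀ᵐ x ∂P, ‖x‖ ≤ R) →
        ∫ x, evalC f x ∂P = ∑ k ∈ Finset.range (K + 1), ∑ l,
          ∫ x, B.Yf k l x • (p k l).eval ((‖x‖ : ℂ) ^ 2) ∂P := by
      intro P _ hP
      rw [hfe, integral_finsetSum]
      · refine Finset.sum_congr rfl fun k _ => ?_
        rw [integral_finsetSum]
        exact fun l _ => integrable_of_closedBall (hc k l) P R hP
      · exact fun k _ => integrable_finsetSum _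
          fun l _ => integrable_of_closedBall (hc k l) P R hP
    rw [hint _ f1 n1, hint _ f2 n2, ← Finset.sum_sub_distrib]
    refine Finset.sum_congr rfl fun k _ => ?_
    rw [← Finset.sum_sub_distrib]
    refine Finset.sum_congr rfl fun l _ => ?_
    exact (B.main_integral σ hsum hsupp hρ ⟨k, l⟩ _ (hg k l)).symm
end
end

section
/- Suppose n is a natural number and T_n : U_{2n}(∞) → ℂ is a linear functional which is pseudo-positive definite with respect to the orthonormal basis Y_{k,l} (i.e. its component functionals T_{n,k,l}(p) := T_n(p(|x|²) Y_{k,l}(x)) on polynomials of degree ≤ 2n satisfy T_{n,k,l}(p*·p) ≥ 0 for deg p ≤ n and T_{n,k,l}(t·p*(t)·p(t)) ≥ 0 for deg p ≤ n−1, for all k, l). Assume there exist non-negative measures σ_{k,l} on [0,∞) representing each T_{n,k,l} on polynomials of degree ≤ 2n−1 such that C_N := Σ_{k=0}^∞ Σ_{l=1}^{a_k} ∫_0^∞ r^N r^{-k} dσ_{k,l}(r) < ∞ for every N ∈ ℕ₀. Then there exists a pseudo-positive signed moment measure σ on ℝ^d such that T_n(f) = ∫_{ℝ^d} f dσ for all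 f ∈ U_{2n-1}(∞). -/
open MeasureTheory MvPolynomial Metric
open scoped ComplexOrder ENNReal

noncomputable section

/-- The space `U_n(∞)`: polynomials `f = ∑_k ∑_l p_{k,l}(|x|²) Y_{k,l}(x)` with
`deg p_{k,l} ≤ n` for all `k`. -/
def HarmonicBasis.MemUInf {d : ℕ} (B : HarmonicBasis d) (n : ℕ)
    (f : MvPolynomial (Fin d) ℂ) : Prop :=
  ∃ (K : ℕ) (p : (k : ℕ) → Fin (B.a k) → Polynomial ℂ),
    (∀ k l, (p k l).natDegree ≤ n) ∧ (∀ k, K < k → ∀ l, p k l = 0) ∧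
    f = ∑ k ∈ Finset.range (K + 1), ∑ l, Polynomial.aeval (normSqP d) (p k l) * B.YC k l

section Helpers

lemma jordan_add_eq {α : Type*} [MeasurableSpace α] (P N : Measure α) [IsFiniteMeasure P]
    [IsFiniteMeasure N] :
    (P.toSignedMeasure - N.toSignedMeasure).toJordanDecomposition.posPart + N =
      (P.toSignedMeasure - N.toSignedMeasure).toJordanDecomposition.negPart + P := by
  set s := P.toSignedMeasure - N.toSignedMeasure with hs
  have h := SignedMeasure.toSignedMeasure_toJordanDecomposition s
  rw [JordanDecomposition.toSignedMeasure] at h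
  rw [← Measure.toSignedMeasure_eq_toSignedMeasure_iff, Measure.toSignedMeasure_add,
    Measure.toSignedMeasure_add]
  have h2 := h.trans hs
  rw [sub_eq_sub_iff_add_eq_add] at h2
  rw [h2, add_comm]

lemma le_of_singular {α : Type*} [MeasurableSpace α] {p q P N : Measure α}
    (hsing : p.MutuallySingular q) (h : p + N = q + P) : p ≤ P := by
  obtain ⟨S, hS, h1, h2⟩ := hsing
  rw [Measure.le_iff]
  intro A hA
  have e : p A ≤ p (A ∩ Sᶜ) := by
    calc p A ≤ p (A ∩ Sᶜ ∪ S) := measure_mono (by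
          intro x hx; by_cases hxS : x ∈ S <;> simp [hx, hxS])
      _ ≤ p (A ∩ Sᶜ) + p S := measure_union_le _ _
      _ = p (A ∩ Sᶜ) := by rw [h1, add_zero]
  calc p A ≤ p (A ∩ Sᶜ) := e
    _ ≤ (p + N) (A ∩ Sᶜ) := by simp
    _ = q (A ∩ Sᶜ) + P (A ∩ Sᶜ) := by rw [h]; simp
    _ = P (A ∩ Sᶜ) := by
        rw [measure_mono_null Set.inter_subset_right h2, zero_add]
    _ ≤ P A := measure_mono Set.inter_subset_left

lemma posPart_le {α : Type*} [MeasurableSpace α] (P N : Measure α) [IsFiniteMeasure P]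
    [IsFiniteMeasure N] :
    (P.toSignedMeasure - N.toSignedMeasure).toJordanDecomposition.posPart ≤ P :=
  le_of_singular (JordanDecomposition.mutuallySingular _) (jordan_add_eq P N)

lemma negPart_le {α : Type*} [MeasurableSpace α] (P N : Measure α) [IsFiniteMeasure P]
    [IsFiniteMeasure N] :
    (P.toSignedMeasure - N.toSignedMeasure).toJordanDecomposition.negPart ≤ N :=
  le_of_singular (JordanDecomposition.mutuallySingular _).symm (jordan_add_eq P N).symm

lemma sInt_sub {α G : Type*} [MeasurableSpace α] [NormedAddCommGroup G] [NormedSpace ℝ G]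
    (P N : Measure α) [IsFiniteMeasure P] [IsFiniteMeasure N] (f : α → G)
    (hP : Integrable f P) (hN : Integrable f N) :
    sInt (P.toSignedMeasure - N.toSignedMeasure) f = ∫ x, f x ∂P - ∫ x, f x ∂N := by
  have h := congrArg (fun m => ∫ x, f x ∂m) (jordan_add_eq P N)
  beta_reduce at h
  rw [integral_add_measure (hP.mono_measure (posPart_le P N)) hN,
    integral_add_measure (hN.mono_measure (negPart_le P N)) hP] at h
  rw [sInt, sub_eq_sub_iff_add_eq_add, h, add_comm]

variable {d : ℕ} (B : HarmonicBasis d) (σ : (k : ℕ) → Fin (B.a k) → Measure ℝ)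

/-- Density `r^{-k}`. -/
def dens (k : ℕ) (r : ℝ) : ℝ≥0∞ := ((ENNReal.ofReal r) ^ k)⁻¹

lemma measurable_dens (k : ℕ) : Measurable (dens k) := by
  unfold dens; fun_prop

/-- Weighted radial measure. -/
def rad (i : Σ k, Fin (B.a k)) : Measure ℝ := (σ i.1 i.2).withDensity (dens i.1)

/-- Polar coordinates. -/
def polar (d : ℕ) (z : ℝ × sphere (0 : E d) 1) : E d := z.1 • (z.2 : E d)

lemma continuous_polar : Continuous (polar d) := by
  unfold polar; fun_prop

lemma measurable_polar : Measurable (polar d) := continuous_polar.measurable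

lemma norm_polar (z : ℝ × sphere (0 : E d) 1) : ‖polar d z‖ = |z.1| := by
  simp [polar, norm_smul]

/-- Pieces with a given angular density. -/
def piece (w : (Σ k, Fin (B.a k)) → sphere (0 : E d) 1 → ℝ≥0∞) (i : Σ k, Fin (B.a k)) :
    Measure (E d) :=
  (((rad B σ i).prod (sphMeas d)).withDensity (fun z => w i z.2)).map (polar d)

/-- The assembled measure. -/
def tot (w : (Σ k, Fin (B.a k)) → sphere (0 : E d) 1 → ℝ≥0∞) : Measure (E d) :=
  Measure.sum (piece B σ w)

def wP (i : Σ k, Fin (B.a k)) (θ : sphere (0 : E d) 1) : ℝ≥0∞ :=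
  ENNReal.ofReal (B.Yf i.1 i.2 θ)
def wN (i : Σ k, Fin (B.a k)) (θ : sphere (0 : E d) 1) : ℝ≥0∞ :=
  ENNReal.ofReal (-B.Yf i.1 i.2 θ)
def wQ (i : Σ k, Fin (B.a k)) (θ : sphere (0 : E d) 1) : ℝ≥0∞ := ‖B.Yf i.1 i.2 θ‖ₑ

instance : IsFiniteMeasure (sphMeas d) := by unfold sphMeas; infer_instance

lemma continuous_Yf (k : ℕ) (l : Fin (B.a k)) : Continuous (B.Yf k l) := by
  unfold HarmonicBasis.Yf
  exact (MvPolynomial.continuous_eval _).comp (by fun_prop)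

lemma continuous_Ys (k : ℕ) (l : Fin (B.a k)) :
    Continuous (fun θ : sphere (0 : E d) 1 => B.Yf k l θ) :=
  (continuous_Yf B k l).comp continuous_subtype_val

lemma measurable_wP (i) : Measurable (wP B i) := by
  have := (continuous_Ys B i.1 i.2).measurable
  unfold wP; fun_prop
lemma measurable_wN (i) : Measurable (wN B i) := by
  have := (continuous_Ys B i.1 i.2).measurable
  unfold wN; fun_prop
lemma measurable_wQ (i) : Measurable (wQ B i) := by
  have := (continuous_Ys B i.1 i.2).measurable
  unfold wQ; fun_prop

lemma tot_mono {w w' : (Σ k, Fin (B.a k)) → sphere (0 : E d) 1 → ℝ≥0∞}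
    (h : ∀ i θ, w i θ ≤ w' i θ) : tot B σ w ≤ tot B σ w' := by
  unfold tot
  rw [Measure.le_iff]
  intro s hs
  rw [Measure.sum_apply _ hs, Measure.sum_apply _ hs]
  refine ENNReal.tsum_le_tsum fun i => ?_
  have hm : ((rad B σ i).prod (sphMeas d)).withDensity (fun z => w i z.2) ≤
      ((rad B σ i).prod (sphMeas d)).withDensity (fun z => w' i z.2) :=
    withDensity_mono (Filter.Eventually.of_forall fun z => h i z.2)
  have hm2 : piece B σ w i ≤ piece B σ w' i := Measure.map_mono hm measurable_polar
  exact hm2 s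

lemma tot_P_le : tot B σ (wP B) ≤ tot B σ (wQ B) :=
  tot_mono B σ fun _ _ => Real.ofReal_le_enorm _

lemma tot_N_le : tot B σ (wN B) ≤ tot B σ (wQ B) :=
  tot_mono B σ fun i θ => by
    have := Real.ofReal_le_enorm (-B.Yf i.1 i.2 θ)
    rwa [enorm_neg] at this

lemma lint_wQ (i : Σ k, Fin (B.a k)) :
    ∫⁻ θ, wQ B i θ ∂(sphMeas d) ≤ sphMeas d Set.univ + 1 := by
  have ho := B.orthonormal i.1 i.1 i.2 i.2
  simp only [and_self, if_true] at ho
  have hint : Integrable (fun θ : sphere (0 : E d) 1 => B.Yf i.1 i.2 θ * B.Yf i.1 i.2 θ)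
      (sphMeas d) := by
    by_contra hc
    have := integral_undef hc
    simp only [HarmonicBasis.Yf] at this
    rw [this] at ho
    exact zero_ne_one ho
  calc ∫⁻ θ, wQ B i θ ∂(sphMeas d)
      ≤ ∫⁻ θ, (1 + ENNReal.ofReal (B.Yf i.1 i.2 θ * B.Yf i.1 i.2 θ)) ∂(sphMeas d) := by
        refine lintegral_mono fun θ => ?_
        simp only [wQ]
        rw [← ofReal_norm, ← ENNReal.ofReal_one,
          ← ENNReal.ofReal_add zero_le_one (mul_self_nonneg _)]
        refine ENNReal.ofReal_le_ofReal ?_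
        rw [Real.norm_eq_abs, ← abs_mul_abs_self]
        nlinarith [sq_nonneg (|B.Yf i.1 i.2 (θ : E d)| - 1),
          abs_nonneg (B.Yf i.1 i.2 (θ : E d))]
    _ = sphMeas d Set.univ + 1 := by
        rw [lintegral_add_left measurable_const, lintegral_const, one_mul,
          ← ofReal_integral_eq_lintegral_ofReal hint
            (Filter.Eventually.of_forall fun θ => mul_self_nonneg _)]
        simp only [HarmonicBasis.Yf]
        rw [ho, ENNReal.ofReal_one]

variable {B σ}

lemma lint_fin (hsum : B.SummCond σ) (N k : ℕ) (l : Fin (B.a k)) :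
    ∫⁻ r, (ENNReal.ofReal r) ^ N * dens k r ∂(σ k l) < ⊤ := by
  refine lt_of_le_of_lt ?_ (hsum N)
  refine le_trans ?_ (ENNReal.le_tsum k)
  exact Finset.single_le_sum (f := fun l => ∫⁻ r, (ENNReal.ofReal r) ^ N *
    ((ENNReal.ofReal r) ^ k)⁻¹ ∂(σ k l)) (fun _ _ => zero_le) (Finset.mem_univ l)

lemma dens_fin (hsum : B.SummCond σ) (k : ℕ) (l : Fin (B.a k)) :
    ∫⁻ r, dens k r ∂(σ k l) < ⊤ := by
  simpa using lint_fin hsum 0 k l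

lemma rad_finite (hsum : B.SummCond σ) (i : Σ k, Fin (B.a k)) :
    IsFiniteMeasure (rad B σ i) :=
  isFiniteMeasure_withDensity (dens_fin hsum i.1 i.2).ne

lemma ae_nonneg (hpos : ∀ k l, (σ k l) (Set.Iio 0) = 0) (k : ℕ) (l : Fin (B.a k)) :
    ∀ᵐ r ∂(σ k l), 0 ≤ r := by
  rw [ae_iff]
  convert hpos k l using 2
  ext r; simp

lemma lint_tot (hpos : ∀ k l, (σ k l) (Set.Iio 0) = 0) (hsum : B.SummCond σ) (m : ℕ) :
    ∫⁻ x, ENNReal.ofReal (‖x‖ ^ m) ∂(tot B σ (wQ B)) < ⊤ := by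
  have hi : ∀ i, ∫⁻ x, ENNReal.ofReal (‖x‖ ^ m) ∂(piece B σ (wQ B) i) ≤
      (∫⁻ r, (ENNReal.ofReal r) ^ m * dens i.1 r ∂(σ i.1 i.2)) *
        (sphMeas d Set.univ + 1) := by
    intro i
    have := rad_finite hsum i
    have hw := measurable_wQ B i
    unfold piece
    rw [lintegral_map (by fun_prop) measurable_polar,
      lintegral_withDensity_eq_lintegral_mul _ (by fun_prop)
        (by have := @measurable_polar d; fun_prop)]
    have e : ∀ z : ℝ × sphere (0 : E d) 1,
        ((fun z : ℝ × sphere (0 : E d) 1 => wQ B i z.2) *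
          fun z => ENNReal.ofReal (‖polar d z‖ ^ m)) z =
        ENNReal.ofReal (|z.1| ^ m) * wQ B i z.2 := by
      intro z; simp only [Pi.mul_apply, norm_polar]; rw [mul_comm]
    simp_rw [e]
    rw [lintegral_prod_mul (f := fun r => ENNReal.ofReal (|r| ^ m)) (by fun_prop)
      hw.aemeasurable]
    refine mul_le_mul' ?_ (lint_wQ B i)
    unfold rad
    rw [lintegral_withDensity_eq_lintegral_mul _ (measurable_dens _) (by fun_prop)]
    refine lintegral_mono_ae ?_
    filter_upwards [ae_nonneg hpos i.1 i.2] with r hr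
    rw [Pi.mul_apply, abs_of_nonneg hr, ENNReal.ofReal_pow hr, mul_comm]
  unfold tot
  rw [lintegral_sum_measure]
  refine lt_of_le_of_lt (ENNReal.tsum_le_tsum hi) ?_
  rw [ENNReal.tsum_mul_right, ENNReal.tsum_sigma']
  refine ENNReal.mul_lt_top ?_ (by simp [measure_lt_top])
  simp_rw [tsum_fintype]
  exact hsum m

lemma int_norm (hpos : ∀ k l, (σ k l) (Set.Iio 0) = 0) (hsum : B.SummCond σ) (m : ℕ) :
    Integrable (fun x => ‖x‖ ^ m) (tot B σ (wQ B)) := by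
  refine ⟨by fun_prop, ?_⟩
  rw [hasFiniteIntegral_iff_ofReal (Filter.Eventually.of_forall fun x => by positivity)]
  exact lint_tot hpos hsum m

lemma tot_finite (hpos : ∀ k l, (σ k l) (Set.Iio 0) = 0) (hsum : B.SummCond σ) :
    IsFiniteMeasure (tot B σ (wQ B)) := by
  refine ⟨?_⟩
  have := lint_tot hpos hsum 0
  simpa using this

lemma continuous_evalC (P : MvPolynomial (Fin d) ℂ) : Continuous (evalC P) := by
  unfold evalC
  exact (MvPolynomial.continuous_eval _).comp (by fun_prop)

lemma int_evalC (hpos : ∀ k l, (σ k l) (Set.Iio 0) = 0) (hsum : B.SummCond σ)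
    (P : MvPolynomial (Fin d) ℂ) : Integrable (evalC P) (tot B σ (wQ B)) := by
  have : evalC P = fun x : E d => ∑ m ∈ P.support, P.coeff m * ∏ i, (x i : ℂ) ^ m i := by
    ext x; simp [evalC, MvPolynomial.eval_eq']
  rw [this]
  refine integrable_finsetSum _ fun m _ => Integrable.const_mul ?_ _
  refine (int_norm hpos hsum (∑ i, m i)).mono
    (Continuous.aestronglyMeasurable (by fun_prop)) (Filter.Eventually.of_forall fun x => ?_)
  rw [norm_prod, norm_pow, norm_norm, ← Finset.prod_pow_eq_pow_sum]
  refine Finset.prod_le_prod (fun _ _ => norm_nonneg _) fun i _ => ?_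
  rw [norm_pow, Complex.norm_real]
  exact pow_le_pow_left₀ (norm_nonneg _) (PiLp.norm_apply_le x i) _

lemma Yf_polar (k : ℕ) (l : Fin (B.a k)) (z : ℝ × sphere (0 : E d) 1) :
    B.Yf k l (polar d z) = z.1 ^ k * B.Yf k l z.2 := by
  have h := B.homogeneous k l
  unfold HarmonicBasis.Yf polar
  rw [MvPolynomial.eval_eq', MvPolynomial.eval_eq', Finset.mul_sum]
  refine Finset.sum_congr rfl fun m hm => ?_
  have hk : ∑ i, m i = k := by
    have := h (MvPolynomial.mem_support_iff.1 hm)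
    rw [← this, Finsupp.weight_apply, Finsupp.sum_fintype _ _ (by simp)]; simp
  simp only [PiLp.smul_apply, smul_eq_mul, mul_pow, Finset.prod_mul_distrib]
  rw [Finset.prod_pow_eq_pow_sum, hk]; ring

lemma int_piece (hsum : B.SummCond σ) {f : E d → ℂ} (hfc : Continuous f)
    (hf : Integrable f (tot B σ (wQ B))) (i : Σ k, Fin (B.a k)) :
    ∫ x, f x ∂(piece B σ (wP B) i) - ∫ x, f x ∂(piece B σ (wN B) i) =
      ∫ z, f (polar d z) * (B.Yf i.1 i.2 z.2 : ℂ) ∂((rad B σ i).prod (sphMeas d)) := by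
  have hP : Integrable f (piece B σ (wP B) i) :=
    (hf.mono_measure (tot_P_le B σ)).mono_measure (Measure.le_sum _ i)
  have hN : Integrable f (piece B σ (wN B) i) :=
    (hf.mono_measure (tot_N_le B σ)).mono_measure (Measure.le_sum _ i)
  have mP := measurable_wP B i
  have mN := measurable_wN B i
  have lP : ∀ᵐ z ∂((rad B σ i).prod (sphMeas d)), wP B i z.2 < ⊤ :=
    Filter.Eventually.of_forall fun _ => ENNReal.ofReal_lt_top
  have lN : ∀ᵐ z ∂((rad B σ i).prod (sphMeas d)), wN B i z.2 < ⊤ :=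
    Filter.Eventually.of_forall fun _ => ENNReal.ofReal_lt_top
  unfold piece at hP hN ⊢
  rw [integrable_map_measure hfc.aestronglyMeasurable measurable_polar.aemeasurable] at hP hN
  rw [integrable_withDensity_iff_integrable_smul' (by fun_prop) lP] at hP
  rw [integrable_withDensity_iff_integrable_smul' (by fun_prop) lN] at hN
  rw [integral_map measurable_polar.aemeasurable hfc.aestronglyMeasurable,
    integral_map measurable_polar.aemeasurable hfc.aestronglyMeasurable,
    integral_withDensity_eq_integral_toReal_smul (by fun_prop) lP,
    integral_withDensity_eq_integral_toReal_smul (by fun_prop) lN]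
  refine (integral_sub hP hN).symm.trans (integral_congr_ae (Filter.Eventually.of_forall fun z => ?_))
  simp only [Function.comp, wP, wN]
  rw [← sub_smul, ENNReal.toReal_ofReal', ENNReal.toReal_ofReal', Complex.real_smul, mul_comm]
  congr 2
  have := max_zero_sub_max_neg_zero_eq_self (B.Yf i.1 i.2 (z.2 : E d))
  simpa [max_comm] using this

lemma int_rad (hpos : ∀ k l, (σ k l) (Set.Iio 0) = 0) (hsum : B.SummCond σ)
    (G : ℝ → ℂ) (i : Σ k, Fin (B.a k)) :
    ∫ r, G |r| * (r : ℂ) ^ i.1 ∂(rad B σ i) = ∫ r, G r ∂(σ i.1 i.2) := by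
  have hlt := ae_lt_top (measurable_dens i.1) (dens_fin hsum i.1 i.2).ne
  unfold rad
  rw [integral_withDensity_eq_integral_toReal_smul (measurable_dens _) hlt]
  refine integral_congr_ae ?_
  filter_upwards [hlt, ae_nonneg hpos i.1 i.2] with r h1 h2
  have h3 : r ^ i.1 ≠ 0 := by
    intro h
    rw [dens, ← ENNReal.ofReal_pow h2, h] at h1
    simp at h1
  rw [abs_of_nonneg h2, dens, ← ENNReal.ofReal_pow h2, ENNReal.toReal_inv,
    ENNReal.toReal_ofReal (pow_nonneg h2 _), Complex.real_smul]
  have h4 : (r : ℂ) ^ i.1 ≠ 0 := by exact_mod_cast h3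
  push_cast
  field_simp

lemma int_key (hpos : ∀ k l, (σ k l) (Set.Iio 0) = 0) (hsum : B.SummCond σ)
    (G : ℝ → ℂ) (hG : Continuous G) (k : ℕ) (l : Fin (B.a k))
    (hf : Integrable (fun x => G ‖x‖ * (B.Yf k l x : ℂ)) (tot B σ (wQ B))) :
    ∫ x, G ‖x‖ * (B.Yf k l x : ℂ) ∂(tot B σ (wP B)) -
      ∫ x, G ‖x‖ * (B.Yf k l x : ℂ) ∂(tot B σ (wN B)) = ∫ r, G r ∂(σ k l) := by
  have hY := continuous_Yf B k l
  have hfc : Continuous (fun x => G ‖x‖ * (B.Yf k l x : ℂ)) := by fun_prop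
  have sP := hasSum_integral_measure (hf.mono_measure (tot_P_le B σ))
  have sN := hasSum_integral_measure (hf.mono_measure (tot_N_le B σ))
  have s := sP.sub sN
  refine s.unique ?_
  have key : ∀ i : Σ k, Fin (B.a k),
      ∫ x, G ‖x‖ * (B.Yf k l x : ℂ) ∂(piece B σ (wP B) i) -
        ∫ x, G ‖x‖ * (B.Yf k l x : ℂ) ∂(piece B σ (wN B) i) =
      (∫ r, G |r| * (r : ℂ) ^ k ∂(rad B σ i)) *
        (if k = i.1 ∧ (l : ℕ) = (i.2 : ℕ) then 1 else 0) := by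
    intro i
    have := rad_finite hsum i
    rw [int_piece hsum hfc hf i]
    have e : ∀ z : ℝ × sphere (0 : E d) 1,
        G ‖polar d z‖ * (B.Yf k l (polar d z) : ℂ) * (B.Yf i.1 i.2 z.2 : ℂ) =
        (G |z.1| * (z.1 : ℂ) ^ k) * ((B.Yf k l z.2 * B.Yf i.1 i.2 z.2 : ℝ) : ℂ) := by
      intro z; rw [norm_polar, Yf_polar]; push_cast; ring
    simp_rw [e]
    rw [integral_prod_mul (fun r : ℝ => G |r| * (r : ℂ) ^ k)
      (fun θ : sphere (0 : E d) 1 => ((B.Yf k l θ * B.Yf i.1 i.2 θ : ℝ) : ℂ))]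
    congr 1
    rw [integral_complex_ofReal]
    have := B.orthonormal k i.1 l i.2
    simp only [HarmonicBasis.Yf]
    rw [this]
    split_ifs <;> simp
  have := hasSum_ite_eq (⟨k, l⟩ : Σ k, Fin (B.a k)) (∫ r, G r ∂(σ k l))
  have hfe : (fun i : Σ k, Fin (B.a k) => ∫ x, G ‖x‖ * (B.Yf k l x : ℂ) ∂(piece B σ (wP B) i) -
        ∫ x, G ‖x‖ * (B.Yf k l x : ℂ) ∂(piece B σ (wN B) i)) =
      fun i => if i = ⟨k, l⟩ then ∫ r, G r ∂(σ k l) else 0 := by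
    funext i
    rw [key i]
    by_cases hi : i = ⟨k, l⟩
    · subst hi
      simp [int_rad hpos hsum G ⟨k, l⟩]
    · rw [if_neg hi, if_neg, mul_zero]
      rintro ⟨h1, h2⟩
      apply hi
      obtain ⟨k', l'⟩ := i
      simp only at h1 h2
      subst h1
      congr 1
      exact Fin.ext h2.symm
  rw [hfe]
  exact this

lemma evalC_comp (k : ℕ) (l : Fin (B.a k)) (p : Polynomial ℂ) (x : E d) :
    evalC (Polynomial.aeval (normSqP d) p * B.YC k l) x =
      p.eval (((‖x‖ : ℝ) : ℂ) ^ 2) * (B.Yf k l x : ℂ) := by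
  unfold evalC HarmonicBasis.YC HarmonicBasis.Yf
  rw [map_mul]
  congr 1
  · have h : eval (fun i => (x i : ℂ)) (normSqP d) = ((‖x‖ : ℝ) : ℂ) ^ 2 := by
      rw [← Complex.ofReal_pow, EuclideanSpace.norm_sq_eq]
      simp [normSqP]
    rw [← h, Polynomial.aeval_def, Polynomial.hom_eval₂, Polynomial.eval₂_eq_eval_map]
    have hid : (eval fun i => (x i : ℂ)).comp (algebraMap ℂ (MvPolynomial (Fin d) ℂ)) =
        RingHom.id ℂ := by
      ext c; simp
    rw [hid, Polynomial.map_id]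
  · rw [MvPolynomial.eval_map]
    have := MvPolynomial.eval₂_comp_left (algebraMap ℝ ℂ) (RingHom.id ℝ) (fun i => x i) (B.Y k l)
    simp only [MvPolynomial.eval₂_id, RingHom.comp_id] at this
    exact this.symm

lemma int_key_poly (hpos : ∀ k l, (σ k l) (Set.Iio 0) = 0) (hsum : B.SummCond σ)
    (k : ℕ) (l : Fin (B.a k)) (p : Polynomial ℂ) :
    ∫ x, evalC (Polynomial.aeval (normSqP d) p * B.YC k l) x ∂(tot B σ (wP B)) -
      ∫ x, evalC (Polynomial.aeval (normSqP d) p * B.YC k l) x ∂(tot B σ (wN B)) =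
    ∫ r, p.eval ((r : ℂ) ^ 2) ∂(σ k l) := by
  have hi := int_evalC hpos hsum (Polynomial.aeval (normSqP d) p * B.YC k l)
  have hc : Continuous (fun r : ℝ => p.eval ((r : ℂ) ^ 2)) :=
    p.continuous.comp (by fun_prop)
  have hi2 : Integrable (fun x : E d => p.eval (((‖x‖ : ℝ) : ℂ) ^ 2) * (B.Yf k l x : ℂ))
      (tot B σ (wQ B)) := hi.congr (Filter.Eventually.of_forall fun x => evalC_comp k l p x)
  have hk := int_key hpos hsum (fun r : ℝ => p.eval ((r : ℂ) ^ 2)) hc k l hi2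
  simp only [evalC_comp]
  exact hk

end Helpers

theorem statement10 {d : ℕ} (hd : 1 ≤ d) (B : HarmonicBasis d) (n : ℕ) (hn : 1 ≤ n)
    (T : MvPolynomial (Fin d) ℂ →ₗ[ℂ] ℂ)
    (hT1 : ∀ (k : ℕ) (l : Fin (B.a k)) (p : Polynomial ℂ), p.natDegree ≤ n →
      0 ≤ B.component T k l (p.map (starRingEnd ℂ) * p))
    (hT2 : ∀ (k : ℕ) (l : Fin (B.a k)) (p : Polynomial ℂ), p.degree < (n : WithBot ℕ) →
      0 ≤ B.component T k l (Polynomial.X * (p.map (starRingEnd ℂ) * p)))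
    (σ : (k : ℕ) → Fin (B.a k) → Measure ℝ)
    (hpos : ∀ k l, (σ k l) (Set.Iio 0) = 0)
    (hrep : ∀ (k : ℕ) (l : Fin (B.a k)) (p : Polynomial ℂ), p.natDegree ≤ 2 * n - 1 →
      B.component T k l p = ∫ r, p.eval ((r : ℂ) ^ 2) ∂(σ k l))
    (hsum : B.SummCond σ) :
    ∃ μ : SignedMeasure (E d), B.PseudoPositive μ ∧ IsMomentMeasure μ ∧
      ∀ f : MvPolynomial (Fin d) ℂ, B.MemUInf (2 * n - 1) f → T f = sInt μ (evalC f) := by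
  have hQ := tot_finite hpos hsum
  have hP : IsFiniteMeasure (tot B σ (wP B)) := isFiniteMeasure_of_le _ (tot_P_le B σ)
  have hN : IsFiniteMeasure (tot B σ (wN B)) := isFiniteMeasure_of_le _ (tot_N_le B σ)
  have hs : ∀ {G : Type} [NormedAddCommGroup G] [NormedSpace ℝ G] (f : E d → G),
      Integrable f (tot B σ (wQ B)) →
      sInt ((tot B σ (wP B)).toSignedMeasure - (tot B σ (wN B)).toSignedMeasure) f =
        ∫ x, f x ∂(tot B σ (wP B)) - ∫ x, f x ∂(tot B σ (wN B)) := fun f hf =>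
    sInt_sub _ _ f (hf.mono_measure (tot_P_le B σ)) (hf.mono_measure (tot_N_le B σ))
  refine ⟨(tot B σ (wP B)).toSignedMeasure - (tot B σ (wN B)).toSignedMeasure, ?_, ?_, ?_⟩
  · intro k l h hc hcs h0
    have hYint : Integrable (fun x => (B.Yf k l x : ℂ)) (tot B σ (wQ B)) := by
      have := int_evalC hpos hsum (Polynomial.aeval (normSqP d) (1 : Polynomial ℂ) * B.YC k l)
      refine this.congr (Filter.Eventually.of_forall fun x => ?_)
      simp only [evalC_comp, Polynomial.eval_one, one_mul]
    obtain ⟨C, hC⟩ := hcs.exists_bound_of_continuous hc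
    have hint : Integrable (fun x => ((h ‖x‖ : ℝ) : ℂ) * (B.Yf k l x : ℂ)) (tot B σ (wQ B)) := by
      refine hYint.bdd_mul (c := C) (Continuous.aestronglyMeasurable (by fun_prop))
        (Filter.Eventually.of_forall fun x => ?_)
      rw [Complex.norm_real]; exact hC _
    have hintR : Integrable (fun x => h ‖x‖ * B.Yf k l x) (tot B σ (wQ B)) := by
      have := hint.re
      refine this.congr (Filter.Eventually.of_forall fun x => ?_)
      simp [← Complex.ofReal_mul]
    have key := int_key hpos hsum (fun r => ((h r : ℝ) : ℂ)) (by fun_prop) k l hint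
    rw [hs _ hintR]
    simp only [← Complex.ofReal_mul] at key
    rw [integral_complex_ofReal, integral_complex_ofReal, integral_complex_ofReal,
      ← Complex.ofReal_sub] at key
    rw [Complex.ofReal_injective key]
    exact integral_nonneg h0
  · intro P
    have hi := int_evalC hpos hsum P
    rw [SignedMeasure.totalVariation]
    exact ((hi.mono_measure (tot_P_le B σ)).mono_measure (posPart_le _ _)).add_measure
      ((hi.mono_measure (tot_N_le B σ)).mono_measure (negPart_le _ _))
  · rintro f ⟨K, p, hdeg, -, rfl⟩
    rw [hs _ (int_evalC hpos hsum _)]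
    have hev : ∀ x : E d, evalC (∑ k ∈ Finset.range (K + 1), ∑ l,
        Polynomial.aeval (normSqP d) (p k l) * B.YC k l) x =
        ∑ k ∈ Finset.range (K + 1), ∑ l,
          evalC (Polynomial.aeval (normSqP d) (p k l) * B.YC k l) x := by
      intro x; simp only [evalC, map_sum]
    simp_rw [hev]
    have hiP := fun P => (int_evalC hpos hsum P).mono_measure (tot_P_le B σ)
    have hiN := fun P => (int_evalC hpos hsum P).mono_measure (tot_N_le B σ)
    rw [integral_finsetSum _ fun k _ => integrable_finsetSum _ fun l _ => hiP _,
      integral_finsetSum _ fun k _ => integrable_finsetSum _ fun l _ => hiN _,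
      ← Finset.sum_sub_distrib, map_sum]
    refine Finset.sum_congr rfl fun k _ => ?_
    rw [integral_finsetSum _ fun l _ => hiP _, integral_finsetSum _ fun l _ => hiN _,
      ← Finset.sum_sub_distrib, map_sum]
    refine Finset.sum_congr rfl fun l _ => ?_
    have h1 := hrep k l (p k l) (hdeg k l)
    rw [HarmonicBasis.component] at h1
    rw [h1]
    exact (int_key_poly hpos hsum k l (p k l)).symm
end
end

section
/- Let μ and σ be pseudo-positive moment measures on ℝ^d and let μ_{k,l}, σ_{k,l} be their component measures on [0,∞), i.e. the unique non-negative measures satisfying ∫_0^∞ h dμ_{k,l} = ∫_{ℝ^d} h(|x|) Y_{k,l}(x) dμ and ∫_0^∞ h dσ_{k,l} = ∫_{ℝ^d} h(|x|) Y_{k,l}(x) dσ for all continuous compactly supported h on [0,∞). If μ_{k,l} = σ_{k,l} for all k ∈ ℕ₀ and l = 1,…,a_k, then μ = σ. -/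
open MeasureTheory MvPolynomial Metric
open scoped ComplexOrder ENNReal

noncomputable section

namespace S11

/-- Fischer functional. -/
def fis {d : ℕ} (Q : MvPolynomial (Fin d) ℝ) : MvPolynomial (Fin d) ℝ →ₗ[ℝ] ℝ :=
  (basisMonomials (Fin d) ℝ).constr ℝ (fun m => (∏ i, ((m i).factorial : ℝ)) * coeff m Q)

lemma fis_monomial {d : ℕ} (Q : MvPolynomial (Fin d) ℝ) (m : Fin d →₀ ℕ) (c : ℝ) :
    fis Q (monomial m c) = c * ((∏ i, ((m i).factorial : ℝ)) * coeff m Q) := by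
  have h1 : monomial m c = c • basisMonomials (Fin d) ℝ m := by
    simp [coe_basisMonomials, smul_monomial]
  rw [h1, map_smul, fis, Module.Basis.constr_basis, smul_eq_mul]

lemma fis_X {d : ℕ} (Q P : MvPolynomial (Fin d) ℝ) (i : Fin d) :
    fis Q (X i * P) = fis (pderiv i Q) P := by
  induction P using MvPolynomial.induction_on' with
  | monomial m c =>
    rw [X, monomial_mul, fis_monomial, fis_monomial, coeff_pderiv, add_comm (Finsupp.single i 1) m,
      one_mul]
    have h1 : (∏ j, (((m + Finsupp.single i 1 : Fin d →₀ ℕ) j).factorial : ℝ))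
        = (m i + 1) * ∏ j, ((m j).factorial : ℝ) := by
      rw [← Finset.mul_prod_erase _ _ (Finset.mem_univ i),
        ← Finset.mul_prod_erase _ (fun j => ((m j).factorial : ℝ)) (Finset.mem_univ i)]
      have : ∏ x ∈ Finset.univ.erase i, (((m + Finsupp.single i 1 : Fin d →₀ ℕ) x).factorial : ℝ)
          = ∏ x ∈ Finset.univ.erase i, ((m x).factorial : ℝ) := by
        refine Finset.prod_congr rfl fun x hx => ?_
        have hx' : i ≠ x := (Finset.ne_of_mem_erase hx).symm
        simp [Finsupp.single_apply, hx']
      rw [this]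
      simp [Nat.factorial_succ]
      ring
    rw [h1]; ring
  | add p q hp hq => rw [mul_add, map_add, map_add, hp, hq]

lemma fis_self {d : ℕ} (Q : MvPolynomial (Fin d) ℝ) (h : fis Q Q = 0) : Q = 0 := by
  have h1 : fis Q Q = ∑ m ∈ Q.support, coeff m Q * ((∏ i, ((m i).factorial : ℝ)) * coeff m Q) := by
    have h0 := congrArg (fis Q) Q.as_sum
    rw [map_sum] at h0
    rw [h0]
    exact Finset.sum_congr rfl fun m _ => fis_monomial _ _ _
  rw [h1, Finset.sum_eq_zero_iff_of_nonneg] at h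
  · by_contra hQ
    obtain ⟨m, hm⟩ := support_nonempty.2 hQ
    have h2 := h m hm
    have h3 : coeff m Q ≠ 0 := mem_support_iff.1 hm
    have h4 : (∏ i, ((m i).factorial : ℝ)) ≠ 0 :=
      Finset.prod_ne_zero_iff.2 fun i _ => by exact_mod_cast Nat.factorial_ne_zero _
    simp [h3, h4] at h2
  · intro m _
    have : 0 ≤ (∏ i, ((m i).factorial : ℝ)) := Finset.prod_nonneg fun i _ => by positivity
    nlinarith [mul_nonneg this (mul_self_nonneg (coeff m Q))]

/-- The real polynomial `|x|²`. -/
def nsq (d : ℕ) : MvPolynomial (Fin d) ℝ := ∑ i, X i ^ 2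

/-- The Laplacian. -/
def lap {d : ℕ} : MvPolynomial (Fin d) ℝ →ₗ[ℝ] MvPolynomial (Fin d) ℝ :=
  ∑ i, (pderiv i).toLinearMap ∘ₗ (pderiv i).toLinearMap

lemma lap_apply {d : ℕ} (P : MvPolynomial (Fin d) ℝ) : lap P = ∑ i, pderiv i (pderiv i P) := by
  simp [lap]

lemma fis_sum {d : ℕ} {ι : Type*} (s : Finset ι) (Q : ι → MvPolynomial (Fin d) ℝ)
    (P : MvPolynomial (Fin d) ℝ) : fis (∑ i ∈ s, Q i) P = ∑ i ∈ s, fis (Q i) P := by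
  induction P using MvPolynomial.induction_on' with
  | monomial m c => simp only [fis_monomial, coeff_sum, Finset.mul_sum]
  | add p q hp hq => simp only [map_add, hp, hq, Finset.sum_add_distrib]

lemma fis_nsq {d : ℕ} (Q P : MvPolynomial (Fin d) ℝ) :
    fis Q (nsq d * P) = fis (lap Q) P := by
  rw [lap_apply, fis_sum, nsq, Finset.sum_mul, map_sum]
  refine Finset.sum_congr rfl fun i _ => ?_
  rw [pow_two, mul_assoc, fis_X, fis_X]

lemma nsq_eval {d : ℕ} (x : E d) : eval (fun i => x i) (nsq d) = ‖x‖ ^ 2 := by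
  simp [nsq, EuclideanSpace.norm_sq_eq]

lemma nsq_ne {d : ℕ} (hd : 1 ≤ d) : nsq d ≠ 0 := by
  intro h
  have h1 := congrArg (eval (fun _ => (1 : ℝ))) h
  simp [nsq] at h1
  omega

lemma nsq_hom (d : ℕ) : (nsq d).IsHomogeneous 2 :=
  IsHomogeneous.sum _ _ _ fun i _ => isHomogeneous_X_pow i 2

lemma lap_hom {d k : ℕ} {P : MvPolynomial (Fin d) ℝ} (h : P.IsHomogeneous (k + 2)) :
    (lap P).IsHomogeneous k := by
  rw [lap_apply]
  exact IsHomogeneous.sum _ _ _ fun i _ => by simpa using (h.pderiv (i := i)).pderiv (i := i)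

lemma fischer {d : ℕ} (hd : 1 ≤ d) (k : ℕ) (P : MvPolynomial (Fin d) ℝ)
    (hP : P.IsHomogeneous (k + 2)) :
    ∃ Q : MvPolynomial (Fin d) ℝ, Q.IsHomogeneous k ∧ lap (P - nsq d * Q) = 0 := by
  let T0 : MvPolynomial (Fin d) ℝ →ₗ[ℝ] MvPolynomial (Fin d) ℝ :=
    lap ∘ₗ LinearMap.mulLeft ℝ (nsq d)
  have hT0 : ∀ Q ∈ homogeneousSubmodule (Fin d) ℝ k, T0 Q ∈ homogeneousSubmodule (Fin d) ℝ k := by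
    intro Q hQ
    rw [mem_homogeneousSubmodule] at *
    refine lap_hom ?_
    have := (nsq_hom d).mul hQ
    rwa [add_comm] at this
  let T := T0.restrict hT0
  have : Module.Finite ℝ (homogeneousSubmodule (Fin d) ℝ k) :=
    Module.Finite.iff_fg.2 (homogeneousSubmodule_fg _ _ k)
  have hinj : Function.Injective T := by
    rw [injective_iff_map_eq_zero]
    rintro ⟨Q, hQ⟩ h0
    have h1 : lap (nsq d * Q) = 0 := congrArg Subtype.val h0
    have h2 : fis (nsq d * Q) (nsq d * Q) = 0 := by
      rw [fis_nsq, h1]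
      have := fis_sum (∅ : Finset ℕ) (fun _ => 0) Q
      simpa using this
    have h3 := fis_self _ h2
    ext1
    exact (mul_eq_zero.1 h3).resolve_left (nsq_ne hd)
  obtain ⟨⟨Q, hQ⟩, h⟩ := (LinearMap.injective_iff_surjective.1 hinj) ⟨lap P, lap_hom hP⟩
  refine ⟨Q, hQ, ?_⟩
  have h1 : lap (nsq d * Q) = lap P := congrArg Subtype.val h
  rw [map_sub, h1, sub_self]

lemma pderiv2_low {d k : ℕ} (hk : k < 2) {P : MvPolynomial (Fin d) ℝ} (h : P.IsHomogeneous k) :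
    lap P = 0 := by
  rw [lap_apply]
  refine Finset.sum_eq_zero fun i _ => ?_
  have h1 : (pderiv i P).IsHomogeneous 0 := by
    have := h.pderiv (i := i)
    rwa [show k - 1 = 0 by omega] at this
  rw [totalDegree_eq_zero_iff_eq_C.1 ((totalDegree_zero_iff_isHomogeneous _).2 h1), pderiv_C]

lemma cont_eval {d : ℕ} (P : MvPolynomial (Fin d) ℝ) :
    Continuous (fun x : E d => eval (fun i => x i) P) :=
  (MvPolynomial.continuous_eval P).comp (by fun_prop)

lemma integ {d : ℕ} (m : Measure (E d)) [IsFiniteMeasure m] (P : MvPolynomial (Fin d) ℝ)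
    {h : ℝ → ℝ} (hc : Continuous h) (hs : HasCompactSupport h) :
    Integrable (fun x : E d => h ‖x‖ * eval (fun i => x i) P) m := by
  refine Continuous.integrable_of_hasCompactSupport
    ((hc.comp continuous_norm).mul (cont_eval P)) (HasCompactSupport.mul_right ?_)
  obtain ⟨R, hR⟩ := hs.isCompact.isBounded.subset_closedBall 0
  refine HasCompactSupport.intro (isCompact_closedBall (0 : E d) R) fun x hx => ?_
  by_contra hne
  have := hR (subset_tsupport _ hne)
  simp at this hx
  linarith

lemma all_poly {d : ℕ} (hd : 1 ≤ d) (B : HarmonicBasis d) (m₁ m₂ : Measure (E d))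
    [IsFiniteMeasure m₁] [IsFiniteMeasure m₂]
    (H : ∀ k l (h : ℝ → ℝ), Continuous h → HasCompactSupport h →
      ∫ x, h ‖x‖ * B.Yf k l x ∂m₁ = ∫ x, h ‖x‖ * B.Yf k l x ∂m₂)
    (P : MvPolynomial (Fin d) ℝ) (h : ℝ → ℝ) (hc : Continuous h) (hs : HasCompactSupport h) :
    ∫ x, h ‖x‖ * eval (fun i => x i) P ∂m₁ = ∫ x, h ‖x‖ * eval (fun i => x i) P ∂m₂ := by
  let S : Submodule ℝ (MvPolynomial (Fin d) ℝ) :=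
    { carrier := {P | ∀ h : ℝ → ℝ, Continuous h → HasCompactSupport h →
        ∫ x : E d, h ‖x‖ * eval (fun i => x i) P ∂m₁
          = ∫ x : E d, h ‖x‖ * eval (fun i => x i) P ∂m₂}
      zero_mem' := by intro h _ _; simp
      add_mem' := by
        intro p q hp hq h hc hs
        simp only [map_add, mul_add]
        rw [integral_add (integ _ _ hc hs) (integ _ _ hc hs),
          integral_add (integ _ _ hc hs) (integ _ _ hc hs), hp h hc hs, hq h hc hs]
      smul_mem' := by
        intro c p hp h hc hs
        simp only [smul_eval, mul_left_comm _ c]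
        rw [integral_const_mul, integral_const_mul, hp h hc hs] }
  have hY : ∀ k P, lap P = 0 → P.IsHomogeneous k → P ∈ S := by
    intro k P h1 h2
    have h3 := B.complete k P (by rwa [lap_apply] at h1) h2
    refine (Submodule.span_le.2 ?_) h3
    rintro _ ⟨l, rfl⟩
    exact H k l
  have hN : ∀ P ∈ S, nsq d * P ∈ S := by
    intro P hP h hc hs
    have hs2 : HasCompactSupport (fun t : ℝ => h t * t ^ 2) :=
      HasCompactSupport.mul_right (f' := fun t : ℝ => t ^ 2) hs
    have hc2 : Continuous (fun t : ℝ => h t * t ^ 2) := by fun_prop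
    have := hP (fun t => h t * t ^ 2) hc2 hs2
    have e : ∀ x : E d, h ‖x‖ * eval (fun i => x i) (nsq d * P)
        = h ‖x‖ * ‖x‖ ^ 2 * eval (fun i => x i) P := by
      intro x
      rw [map_mul, nsq_eval, mul_assoc]
    simp only [e]
    exact this
  have hhom : ∀ k, ∀ P : MvPolynomial (Fin d) ℝ, P.IsHomogeneous k → P ∈ S := by
    intro k
    induction k using Nat.strong_induction_on with
    | _ k ih =>
      intro P hP
      by_cases hk : k < 2
      · exact hY k P (pderiv2_low hk hP) hP
      · obtain ⟨j, rfl⟩ : ∃ j, k = j + 2 := ⟨k - 2, by omega⟩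
        obtain ⟨Q, hQ, hl⟩ := fischer hd j P hP
        have h1 : nsq d * Q ∈ S := hN Q (ih j (by omega) Q hQ)
        have h2 : (nsq d * Q).IsHomogeneous (j + 2) := by
          have := (nsq_hom d).mul hQ
          rwa [add_comm] at this
        have h3 := hY _ _ hl (hP.sub h2)
        simpa using S.add_mem h3 h1
  have hP : P ∈ S := by
    rw [← sum_homogeneousComponent P]
    exact S.sum_mem fun i _ => hhom i _ (homogeneousComponent_isHomogeneous i P)
  exact hP h hc hs

/-- Coordinate polynomial functions as an algebra homomorphism into `C(E d, ℝ)`. -/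
def polyHom (d : ℕ) : MvPolynomial (Fin d) ℝ →ₐ[ℝ] C(E d, ℝ) :=
  aeval (fun i => (⟨fun x => x i, by fun_prop⟩ : C(E d, ℝ)))

lemma polyHom_apply {d : ℕ} (P : MvPolynomial (Fin d) ℝ) (x : E d) :
    polyHom d P x = eval (fun i => x i) P := by
  induction P using MvPolynomial.induction_on with
  | C a => simp [polyHom]
  | add p q hp hq => simp [hp, hq]
  | mul_X p i hp => simp [hp]; left; simp [polyHom]

lemma approx {d : ℕ} (f : C(E d, ℝ)) (R : ℝ) {ε : ℝ} (hε : 0 < ε) :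
    ∃ P : MvPolynomial (Fin d) ℝ, ∀ x ∈ closedBall (0 : E d) R,
      |eval (fun i => x i) P - f x| < ε := by
  have hsep : (polyHom d).range.SeparatesPoints := by
    intro x y hxy
    obtain ⟨i, hi⟩ : ∃ i, x i ≠ y i := by
      by_contra hcon
      push Not at hcon
      exact hxy (by ext i; exact hcon i)
    refine ⟨_, ⟨polyHom d (X i), ⟨X i, rfl⟩, rfl⟩, ?_⟩
    simpa [polyHom_apply] using hi
  obtain ⟨g, ⟨P, rfl⟩, hg⟩ :=
    ContinuousMap.exists_mem_subalgebra_near_continuous_of_isCompact_of_separatesPoints hsep f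
      (isCompact_closedBall (0 : E d) R) hε
  refine ⟨P, fun x hx => ?_⟩
  have := hg x hx
  rw [Real.norm_eq_abs] at this
  rw [← polyHom_apply]
  exact this

lemma meas_eq {d : ℕ} (m₁ m₂ : Measure (E d)) [IsFiniteMeasure m₁] [IsFiniteMeasure m₂]
    (H : ∀ (P : MvPolynomial (Fin d) ℝ) (h : ℝ → ℝ), Continuous h → HasCompactSupport h →
      ∫ x, h ‖x‖ * eval (fun i => x i) P ∂m₁ = ∫ x, h ‖x‖ * eval (fun i => x i) P ∂m₂) :
    m₁ = m₂ := by
  refine Measure.ext_of_integral_eq_on_compactlySupported fun f => ?_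
  obtain ⟨R, hR⟩ := f.hasCompactSupport.isCompact.isBounded.subset_closedBall 0
  let h : ℝ → ℝ := fun t => max 0 (min 1 (R + 1 - |t|))
  have hc : Continuous h := by fun_prop
  have h0 : ∀ t, 0 ≤ h t := fun t => le_max_left _ _
  have h1 : ∀ t, h t ≤ 1 := fun t => max_le zero_le_one (min_le_left _ _)
  have hz : ∀ t, R + 1 < |t| → h t = 0 := fun t ht =>
    max_eq_left ((min_le_right _ _).trans (by linarith))
  have ho : ∀ t, |t| ≤ R → h t = 1 := fun t ht => by
    have : min 1 (R + 1 - |t|) = 1 := min_eq_left (by linarith)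
    simp [h, this]
  have hs : HasCompactSupport h := by
    refine HasCompactSupport.intro (isCompact_closedBall (0 : ℝ) (R + 1)) fun t ht => hz t ?_
    simpa using ht
  have hf : ∀ x, h ‖x‖ * f x = f x := by
    intro x
    by_cases hx : f x = 0
    · simp [hx]
    · have := hR (subset_tsupport _ hx)
      rw [ho, one_mul]
      simpa using this
  have bound : ∀ (m : Measure (E d)) [IsFiniteMeasure m] (P : MvPolynomial (Fin d) ℝ) (ε : ℝ),
      0 < ε → (∀ x ∈ closedBall (0 : E d) (R + 1), |eval (fun i => x i) P - f x| < ε) →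
      |∫ x, h ‖x‖ * eval (fun i => x i) P ∂m - ∫ x, f x ∂m| ≤ ε * m.real Set.univ := by
    intro m _ P ε hε hP
    rw [← integral_sub (integ m P hc hs) f.integrable, ← Real.norm_eq_abs]
    refine norm_integral_le_of_norm_le_const (Filter.Eventually.of_forall fun x => ?_)
    have e : h ‖x‖ * eval (fun i => x i) P - f x = h ‖x‖ * (eval (fun i => x i) P - f x) := by
      rw [mul_sub, hf]
    rw [e, Real.norm_eq_abs, abs_mul, abs_of_nonneg (h0 _)]
    by_cases hx : ‖x‖ ≤ R + 1
    · have := hP x (by simpa using hx)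
      calc _ ≤ 1 * ε := mul_le_mul (h1 _) this.le (abs_nonneg _) zero_le_one
        _ = ε := one_mul _
    · rw [hz]
      · simpa using hε.le
      · simpa using hx
  rw [← sub_eq_zero, ← abs_eq_zero]
  refine le_antisymm (le_of_forall_pos_le_add fun δ hδ => ?_) (abs_nonneg _)
  set M : ℝ := m₁.real Set.univ + m₂.real Set.univ + 1
  have hM : 0 < M := by positivity
  obtain ⟨P, hP⟩ := approx (f : C(E d, ℝ)) (R + 1) (div_pos hδ hM)
  have b1 := bound m₁ P _ (div_pos hδ hM) hP
  have b2 := bound m₂ P _ (div_pos hδ hM) hP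
  rw [H P h hc hs] at b1
  rw [abs_sub_comm] at b1
  have b3 := abs_sub_le (∫ x, f x ∂m₁) (∫ x, h ‖x‖ * eval (fun i => x i) P ∂m₂) (∫ x, f x ∂m₂)
  have b4 : δ / M * M = δ := by field_simp
  have b5 : 0 < δ / M := div_pos hδ hM
  have b6 : δ / M * M = δ / M * m₁.real Set.univ + δ / M * m₂.real Set.univ + δ / M := by
    simp only [M]; ring
  linarith

end S11

theorem statement11 {d : ℕ} (hd : 1 ≤ d) (B : HarmonicBasis d)
    (μ σ : SignedMeasure (E d)) (hμm : IsMomentMeasure μ) (hσm : IsMomentMeasure σ)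
    (hμp : B.PseudoPositive μ) (hσp : B.PseudoPositive σ)
    (ν ρ : (k : ℕ) → Fin (B.a k) → Measure ℝ)
    (hν : B.IsComponentFamily μ ν) (hρ : B.IsComponentFamily σ ρ)
    (h : ∀ k l, ν k l = ρ k l) : μ = σ := by
  have key : μ.toJordanDecomposition.posPart + σ.toJordanDecomposition.negPart
      = σ.toJordanDecomposition.posPart + μ.toJordanDecomposition.negPart := by
    refine S11.meas_eq _ _ (S11.all_poly hd B _ _ ?_)
    intro k l g hc hs
    have h1 := (hν k l).2 g hc hs
    rw [h k l, (hρ k l).2 g hc hs, sInt, sInt] at h1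
    have hi : ∀ (m : Measure (E d)) [IsFiniteMeasure m],
        Integrable (fun x : E d => g ‖x‖ * B.Yf k l x) m :=
      fun m _ => S11.integ m (B.Y k l) hc hs
    rw [integral_add_measure (hi _) (hi _), integral_add_measure (hi _) (hi _)]
    linarith
  rw [← μ.toSignedMeasure_toJordanDecomposition, ← σ.toSignedMeasure_toJordanDecomposition]
  have key2 := (Measure.toSignedMeasure_eq_toSignedMeasure_iff).2 key
  rw [Measure.toSignedMeasure_add, Measure.toSignedMeasure_add] at key2
  unfold JordanDecomposition.toSignedMeasure
  rw [sub_eq_sub_iff_add_eq_add]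
  exact key2
end
end

section
/- Let ν be a non-negative moment measure on ℝ with support in [0,∞) which is not determined in the sense of Stieltjes. Then there exist uncountably many non-negative measures σ on [0,∞) having the same moments as ν (σ ∈ W_ν^Sti) and satisfying ∫_0^∞ u^{-k} dσ(u) < ∞ for all k ∈ ℕ₀. -/
open MeasureTheory MvPolynomial Metric
open scoped ComplexOrder ENNReal

noncomputable section

/-- Reflecting all complex roots to the positive axis, multiset version. -/
lemma aux_reflect_multiset (a : ℂ) (m : Multiset ℂ) :
    ∃ P : Polynomial ℝ,
      (∀ u : ℝ, 0 ≤ u →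
        |P.eval u| ≤ ‖((Polynomial.C a * (m.map (fun r => Polynomial.X - Polynomial.C r)).prod).eval (u : ℂ))‖) ∧
      (∀ t : ℝ, |t| ≤ 1 →
        ‖((Polynomial.C a * (m.map (fun r => Polynomial.X - Polynomial.C r)).prod).eval (t : ℂ))‖ ≤ |P.eval (-1)|) := by
  induction m using Multiset.induction_on with
  | empty =>
    refine ⟨Polynomial.C ‖a‖, ?_, ?_⟩ <;> intros <;> simp
  | cons r m ih =>
    obtain ⟨P, h1, h2⟩ := ih
    refine ⟨P * (Polynomial.X - Polynomial.C ‖r‖), ?_, ?_⟩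
    · intro u hu
      have h := h1 u hu
      have h3 : |u - ‖r‖| ≤ ‖(u : ℂ) - r‖ := by
        have := abs_norm_sub_norm_le (u : ℂ) r
        rwa [Complex.norm_real, Real.norm_of_nonneg hu] at this
      have h4 := mul_le_mul h h3 (abs_nonneg _) (norm_nonneg _)
      simp only [Multiset.map_cons, Multiset.prod_cons, Polynomial.eval_mul, Polynomial.eval_sub,
        Polynomial.eval_X, Polynomial.eval_C, norm_mul, abs_mul] at h4 ⊢
      linarith
    · intro t ht
      have h := h2 t ht
      have h3 : ‖(t : ℂ) - r‖ ≤ |(-1) - ‖r‖| := by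
        have h5 := norm_sub_le (t : ℂ) r
        rw [Complex.norm_real, Real.norm_eq_abs] at h5
        have : |(-1) - ‖r‖| = 1 + ‖r‖ := by
          rw [abs_of_nonpos] <;> [ring; linarith [norm_nonneg r]]
        linarith
      have h4 := mul_le_mul h h3 (norm_nonneg _) (abs_nonneg _)
      simp only [Multiset.map_cons, Multiset.prod_cons, Polynomial.eval_mul, Polynomial.eval_sub,
        Polynomial.eval_X, Polynomial.eval_C, norm_mul, abs_mul] at h4 ⊢
      linarith

lemma aux_reflect (p : Polynomial ℝ) :
    ∃ P : Polynomial ℝ, (∀ u : ℝ, 0 ≤ u → |P.eval u| ≤ |p.eval u|) ∧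
      (∀ t : ℝ, |t| ≤ 1 → |p.eval t| ≤ |P.eval (-1)|) := by
  obtain ⟨P, h1, h2⟩ := aux_reflect_multiset (p.map (algebraMap ℝ ℂ)).leadingCoeff
    (p.map (algebraMap ℝ ℂ)).roots
  have hs := (IsAlgClosed.splits (p.map (algebraMap ℝ ℂ))).eq_prod_roots
  rw [← hs] at h1 h2
  have he : ∀ t : ℝ, ‖(p.map (algebraMap ℝ ℂ)).eval (t : ℂ)‖ = |p.eval t| := by
    intro t
    rw [Polynomial.eval_map, ← Complex.coe_algebraMap, Polynomial.eval₂_at_apply,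
      Complex.coe_algebraMap, Complex.norm_real, Real.norm_eq_abs]
  refine ⟨P, fun u hu => by rw [← he]; exact h1 u hu, fun t ht => by rw [← he]; exact h2 t ht⟩

lemma aux_integrable_poly (μ : Measure ℝ) (hmom : ∀ m : ℕ, Integrable (fun t => t ^ m) μ)
    (p : Polynomial ℝ) : Integrable (fun t => p.eval t) μ := by
  simp only [Polynomial.eval_eq_sum_range]
  exact integrable_finsetSum _ (fun i _ => (hmom i).const_mul _)

/-- Positivity of the perturbed moment functional. -/
lemma aux_pos (μ : Measure ℝ) [IsFiniteMeasure μ] (h0 : μ (Set.Iio 0) = 0)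
    (hmom : ∀ m : ℕ, Integrable (fun t => t ^ m) μ) (K : ℝ) (hK : 0 < K)
    (hB : ∀ P : Polynomial ℝ, |P.eval (-1)| ≤ K * ∫ u, |P.eval u| ∂μ) :
    ∃ ε δ : ℝ, 0 < ε ∧ ε < 1 ∧ 0 < δ ∧ ∀ s ∈ Set.Icc ε 1, ∀ p : Polynomial ℝ,
      (∀ u, ε ≤ u → 0 ≤ p.eval u) → 0 ≤ (1 / 2) * (∫ u, p.eval u ∂μ) - δ * p.eval s := by
  set m : ℝ := μ.real Set.univ with hm
  have hm0 : 0 ≤ m := measureReal_nonneg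
  have hae : ∀ᵐ u ∂μ, 0 ≤ u := by
    rw [ae_iff]; convert h0 using 2; ext; simp
  have hC : ∀ p : Polynomial ℝ, ∀ t : ℝ, |t| ≤ 1 → |p.eval t| ≤ K * ∫ u, |p.eval u| ∂μ := by
    intro p t ht
    obtain ⟨P, h1, h2⟩ := aux_reflect p
    refine (h2 t ht).trans ((hB P).trans (mul_le_mul_of_nonneg_left ?_ hK.le))
    refine integral_mono_ae (aux_integrable_poly μ hmom P).abs (aux_integrable_poly μ hmom p).abs ?_
    filter_upwards [hae] with u hu using h1 u hu
  have hD : ∀ ε : ℝ, 0 ≤ ε → ε ≤ 1 → ∀ p : Polynomial ℝ, ∀ s0 t : ℝ, s0 ∈ Set.Icc 0 ε →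
      t ∈ Set.Icc 0 ε → p.eval s0 = 0 → |p.eval t| ≤ ε * (K * ∫ u, |p.eval u| ∂μ) := by
    intro ε hε hε1 p s0 t hs0 ht hroot
    obtain ⟨q, rfl⟩ := Polynomial.dvd_iff_isRoot.mpr hroot
    obtain ⟨Q, h1, h2⟩ := aux_reflect q
    have h3 := h2 t (by rw [abs_of_nonneg ht.1]; exact ht.2.trans hε1)
    have h4 := hB ((Polynomial.X - Polynomial.C s0) * Q)
    have h5 : ∫ u, |((Polynomial.X - Polynomial.C s0) * Q).eval u| ∂μ ≤
        ∫ u, |((Polynomial.X - Polynomial.C s0) * q).eval u| ∂μ := by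
      refine integral_mono_ae (aux_integrable_poly μ hmom _).abs
        (aux_integrable_poly μ hmom _).abs ?_
      filter_upwards [hae] with u hu
      simp only [Polynomial.eval_mul, abs_mul]
      exact mul_le_mul_of_nonneg_left (h1 u hu) (abs_nonneg _)
    have h6 : |Q.eval (-1)| ≤ |((Polynomial.X - Polynomial.C s0) * Q).eval (-1)| := by
      rw [Polynomial.eval_mul, abs_mul]
      refine le_mul_of_one_le_left (abs_nonneg _) ?_
      simp only [Polynomial.eval_sub, Polynomial.eval_X, Polynomial.eval_C]
      rw [abs_of_nonpos] <;> linarith [hs0.1]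
    have h7 : |t - s0| ≤ ε := by
      rw [abs_le]; constructor <;> linarith [hs0.1, hs0.2, ht.1, ht.2]
    have h8 := mul_le_mul_of_nonneg_left h5 hK.le
    calc _ = |t - s0| * |q.eval t| := by simp [abs_mul]
      _ ≤ ε * |q.eval t| := mul_le_mul_of_nonneg_right h7 (abs_nonneg _)
      _ ≤ _ := mul_le_mul_of_nonneg_left (by linarith) hε
  obtain ⟨ε, hε, hε1, hεK⟩ : ∃ ε : ℝ, 0 < ε ∧ ε < 1 ∧ 4 * ε * K * m ≤ 1 := by
    have hpos : 0 < 4 * K * m + 2 := by positivity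
    refine ⟨1 / (4 * K * m + 2), by positivity, ?_, ?_⟩
    · rw [div_lt_one hpos]; nlinarith [mul_nonneg hK.le hm0]
    · have : 4 * (1 / (4 * K * m + 2)) * K * m = (4 * K * m) / (4 * K * m + 2) := by ring
      rw [this, div_le_one hpos]; linarith
  refine ⟨ε, 1 / (4 * K), hε, hε1, by positivity, ?_⟩
  intro s hs p hp
  set J := ∫ u, |p.eval u| ∂μ with hJ
  have hJ0 : 0 ≤ J := integral_nonneg (fun u => abs_nonneg _)
  have hpt : ∀ u : ℝ, 0 ≤ u → |p.eval u| - p.eval u ≤ 2 * (ε * (K * J)) := by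
    intro u hu
    rcases le_or_gt 0 (p.eval u) with h | h
    · rw [abs_of_nonneg h, sub_self]; positivity
    · have huε : u < ε := by
        by_contra hc
        exact absurd (hp u (not_lt.mp hc)) (not_le.mpr h)
      obtain ⟨s0, hs0, hs00⟩ := intermediate_value_Icc huε.le p.continuous.continuousOn
        (show (0 : ℝ) ∈ Set.Icc (p.eval u) (p.eval ε) from ⟨h.le, hp ε le_rfl⟩)
      have := hD ε hε.le hε1.le p s0 u ⟨hu.trans hs0.1, hs0.2⟩ ⟨hu, huε.le⟩ hs00
      have h2 := neg_abs_le (p.eval u)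
      linarith
  have hint := aux_integrable_poly μ hmom p
  have h1 : J - ∫ u, p.eval u ∂μ ≤ 2 * (ε * (K * J)) * m := by
    rw [hJ, ← integral_sub hint.abs hint]
    calc _ ≤ ∫ u, 2 * (ε * (K * J)) ∂μ := by
          refine integral_mono_ae (hint.abs.sub hint) (integrable_const _) ?_
          filter_upwards [hae] with u hu using hpt u hu
      _ = _ := by rw [integral_const, smul_eq_mul, mul_comm]
  have h2 : p.eval s ≤ K * J := (le_abs_self _).trans
    (hC p s (by rw [abs_of_nonneg (hε.le.trans hs.1)]; exact hs.2))
  have h3 : 1 / (4 * K) * p.eval s ≤ J / 4 := by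
    calc _ ≤ 1 / (4 * K) * (K * J) := mul_le_mul_of_nonneg_left h2 (by positivity)
      _ = J / 4 := by field_simp
  have h4 : (4 * ε * K * m) * J ≤ 1 * J := mul_le_mul_of_nonneg_right hεK hJ0
  nlinarith

/-- A bounded continuous injective function agreeing with `1 / (1 + u)` on `[0, ∞)`. -/
def auxPhi (u : ℝ) : ℝ := 1 - u / (1 + |u|)

lemma auxPhi_cont : Continuous auxPhi := by
  unfold auxPhi
  refine continuous_const.sub (continuous_id.div (by fun_prop) ?_)
  intro u; positivity

lemma auxPhi_bound (u : ℝ) : |auxPhi u| ≤ 2 := by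
  unfold auxPhi
  have h : |u / (1 + |u|)| ≤ 1 := by
    rw [abs_div, abs_of_pos (show 0 < 1 + |u| by positivity), div_le_one (by positivity)]
    linarith
  have := abs_le.mp h
  rw [abs_le]; constructor <;> linarith

lemma auxPhi_nonneg (u : ℝ) (hu : 0 ≤ u) : auxPhi u = (1 + u)⁻¹ := by
  unfold auxPhi
  rw [abs_of_nonneg hu]
  field_simp
  ring

lemma auxPhi_inj : Function.Injective auxPhi := by
  intro a b h
  unfold auxPhi at h
  have h' : a / (1 + |a|) = b / (1 + |b|) := by linarith
  rw [div_eq_div_iff (by positivity) (by positivity)] at h'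
  rcases abs_cases a with ⟨ha, _⟩ | ⟨ha, _⟩ <;> rcases abs_cases b with ⟨hb, _⟩ | ⟨hb, _⟩ <;>
    rw [ha, hb] at h' <;> nlinarith

/-- The subalgebra of polynomials in `auxPhi`. -/
def auxAlg : StarSubalgebra ℝ (BoundedContinuousFunction ℝ ℝ) where
  carrier := {g | ∃ p : Polynomial ℝ, ∀ u, g u = p.eval (auxPhi u)}
  mul_mem' := by
    rintro a b ⟨p, hp⟩ ⟨q, hq⟩
    exact ⟨p * q, fun u => by simp [hp, hq]⟩
  add_mem' := by
    rintro a b ⟨p, hp⟩ ⟨q, hq⟩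
    exact ⟨p + q, fun u => by simp [hp, hq]⟩
  algebraMap_mem' := fun r => ⟨Polynomial.C r, fun u => by simp⟩
  star_mem' := by
    rintro a ⟨p, hp⟩
    exact ⟨p, fun u => by simp [hp]⟩

lemma aux_ext (σ τ : Measure ℝ) [IsFiniteMeasure σ] [IsFiniteMeasure τ]
    (hσ : ∀ᵐ u ∂σ, 0 ≤ u) (hτ : ∀ᵐ u ∂τ, 0 ≤ u)
    (h : ∀ k : ℕ, ∫ u, ((1 + u)⁻¹) ^ k ∂σ = ∫ u, ((1 + u)⁻¹) ^ k ∂τ) : σ = τ := by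
  have hint : ∀ (μ : Measure ℝ) [IsFiniteMeasure μ] (k : ℕ),
      Integrable (fun u => auxPhi u ^ k) μ := by
    intro μ _ k
    refine Integrable.of_bound (auxPhi_cont.pow k).aestronglyMeasurable (2 ^ k) ?_
    filter_upwards with u
    rw [norm_pow]
    exact pow_le_pow_left₀ (norm_nonneg _) (auxPhi_bound u) k
  have hk : ∀ k : ℕ, ∫ u, auxPhi u ^ k ∂σ = ∫ u, auxPhi u ^ k ∂τ := by
    intro k
    have e : ∀ (μ : Measure ℝ), (∀ᵐ u ∂μ, 0 ≤ u) →
        ∫ u, auxPhi u ^ k ∂μ = ∫ u, ((1 + u)⁻¹) ^ k ∂μ := by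
      intro μ hμ
      refine integral_congr_ae ?_
      filter_upwards [hμ] with u hu
      rw [auxPhi_nonneg u hu]
    rw [e σ hσ, e τ hτ, h]
  refine ext_of_forall_mem_subalgebra_integral_eq_of_polish (𝕜 := ℝ) (A := auxAlg) ?_ ?_
  · intro a b hab
    let g : BoundedContinuousFunction ℝ ℝ :=
      BoundedContinuousFunction.ofNormedAddCommGroup auxPhi auxPhi_cont 2 auxPhi_bound
    refine ⟨g, ⟨BoundedContinuousFunction.toContinuousMapStarₐ ℝ g, ⟨g, ⟨Polynomial.X, fun u => ?_⟩, rfl⟩, rfl⟩,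
      fun hc => hab (auxPhi_inj hc)⟩
    simp [g]
  · rintro g ⟨p, hp⟩
    simp only [hp, Polynomial.eval_eq_sum_range]
    rw [integral_finsetSum _ (fun i _ => (hint σ i).const_mul _),
      integral_finsetSum _ (fun i _ => (hint τ i).const_mul _)]
    refine Finset.sum_congr rfl fun i _ => ?_
    rw [integral_const_mul, integral_const_mul, hk]

/-- Point evaluation at `-1` is bounded if there are two different solutions. -/
lemma aux_eval (σ τ : Measure ℝ) [IsFiniteMeasure σ] [IsFiniteMeasure τ]
    (hσ : ∀ᵐ u ∂σ, 0 ≤ u) (hτ : ∀ᵐ u ∂τ, 0 ≤ u)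
    (hmσ : ∀ m : ℕ, Integrable (fun t => t ^ m) σ)
    (hmτ : ∀ m : ℕ, Integrable (fun t => t ^ m) τ)
    (heq : ∀ m : ℕ, ∫ t, t ^ m ∂σ = ∫ t, t ^ m ∂τ) (hne : σ ≠ τ) :
    ∃ K : ℝ, 0 < K ∧ ∀ P : Polynomial ℝ, |P.eval (-1)| ≤ K * ∫ u, |P.eval u| ∂(σ + τ) := by
  classical
  have hex : ∃ k : ℕ, ∫ u, ((1 + u)⁻¹) ^ k ∂σ ≠ ∫ u, ((1 + u)⁻¹) ^ k ∂τ := by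
    by_contra hc
    push Not at hc
    exact hne (aux_ext σ τ hσ hτ hc)
  let D : ℕ → Polynomial ℝ → ℝ := fun k P =>
    ∫ u, P.eval u * ((1 + u)⁻¹) ^ k ∂σ - ∫ u, P.eval u * ((1 + u)⁻¹) ^ k ∂τ
  have hb : ∀ (k : ℕ) (u : ℝ), 0 ≤ u → ((1 + u)⁻¹) ^ k ≤ 1 ∧ 0 ≤ ((1 + u)⁻¹) ^ k := by
    intro k u hu
    refine ⟨pow_le_one₀ (by positivity) (inv_le_one_of_one_le₀ (by linarith)), by positivity⟩
  have hbn : ∀ (P : Polynomial ℝ) (k : ℕ) (u : ℝ), 0 ≤ u →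
      |P.eval u * ((1 + u)⁻¹) ^ k| ≤ |P.eval u| := by
    intro P k u hu
    rw [abs_mul, abs_of_nonneg (hb k u hu).2]
    exact mul_le_of_le_one_right (abs_nonneg _) (hb k u hu).1
  have hint : ∀ (μ : Measure ℝ), (∀ᵐ u ∂μ, 0 ≤ u) → (∀ m : ℕ, Integrable (fun t => t ^ m) μ) →
      ∀ (P : Polynomial ℝ) (k : ℕ), Integrable (fun u => P.eval u * ((1 + u)⁻¹) ^ k) μ := by
    intro μ hμ hm P k
    refine (aux_integrable_poly μ hm P).mono ?_ ?_
    · exact (P.continuous.measurable.mul (by fun_prop)).aestronglyMeasurable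
    · filter_upwards [hμ] with u hu using hbn P k u hu
  have hstep : ∀ (k : ℕ) (P : Polynomial ℝ), ∃ Q : Polynomial ℝ,
      D (k + 1) P = P.eval (-1) * (∫ u, ((1 + u)⁻¹) ^ (k + 1) ∂σ - ∫ u, ((1 + u)⁻¹) ^ (k + 1) ∂τ)
        + D k Q := by
    intro k P
    obtain ⟨Q, hQ⟩ := Polynomial.X_sub_C_dvd_sub_C_eval (a := (-1 : ℝ)) (p := P)
    refine ⟨Q, ?_⟩
    have e : ∀ (μ : Measure ℝ), (∀ᵐ u ∂μ, 0 ≤ u) → (∀ m : ℕ, Integrable (fun t => t ^ m) μ) →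
        ∫ u, P.eval u * ((1 + u)⁻¹) ^ (k + 1) ∂μ =
          P.eval (-1) * (∫ u, ((1 + u)⁻¹) ^ (k + 1) ∂μ) + ∫ u, Q.eval u * ((1 + u)⁻¹) ^ k ∂μ := by
      intro μ hμ hm
      have i1 : Integrable (fun u : ℝ => ((1 + u)⁻¹) ^ (k + 1)) μ := by
        simpa using hint μ hμ hm 1 (k + 1)
      rw [← integral_const_mul, ← integral_add (i1.const_mul _) (hint μ hμ hm Q k)]
      refine integral_congr_ae ?_
      filter_upwards [hμ] with u hu
      have h1 : P.eval u = P.eval (-1) + (u + 1) * Q.eval u := by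
        have := congrArg (Polynomial.eval u) hQ
        simp only [Polynomial.eval_sub, Polynomial.eval_mul, Polynomial.eval_X,
          Polynomial.eval_C] at this
        linarith
      have h2 : (1 + u) ≠ 0 := by positivity
      rw [h1, pow_succ]
      field_simp
      ring
    simp only [D]
    rw [e σ hσ hmσ, e τ hτ hmτ]
    ring
  have h0 : ∀ P, D 0 P = 0 := by
    intro P
    simp only [D, pow_zero, mul_one, Polynomial.eval_eq_sum_range]
    rw [integral_finsetSum _ (fun i _ => (hmσ i).const_mul _),
      integral_finsetSum _ (fun i _ => (hmτ i).const_mul _), sub_eq_zero]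
    refine Finset.sum_congr rfl fun i _ => ?_
    rw [integral_const_mul, integral_const_mul, heq]
  set k := Nat.find hex with hk
  have hmin : ∀ j, j < k → ∀ P, D j P = 0 := by
    intro j
    induction j with
    | zero => intro _ P; exact h0 P
    | succ j ih =>
      intro hj P
      obtain ⟨Q, hQ⟩ := hstep j P
      have := Nat.find_min hex hj
      push Not at this
      rw [hQ, this, ih (by omega) Q]; ring
  have hkne := Nat.find_spec hex
  rw [← hk] at hkne
  obtain ⟨n, hn⟩ : ∃ n, k = n + 1 := by
    refine Nat.exists_eq_succ_of_ne_zero fun hz => ?_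
    rw [hz] at hkne
    apply hkne
    simpa using heq 0
  rw [hn] at hkne
  set Δ := ∫ u, ((1 + u)⁻¹) ^ (n + 1) ∂σ - ∫ u, ((1 + u)⁻¹) ^ (n + 1) ∂τ with hΔ
  have hΔ0 : 0 < |Δ| := abs_pos.mpr (sub_ne_zero.mpr hkne)
  refine ⟨|Δ|⁻¹, inv_pos.mpr hΔ0, fun P => ?_⟩
  obtain ⟨Q, hQ⟩ := hstep n P
  rw [hmin n (by omega) Q, add_zero, ← hΔ] at hQ
  rw [inv_mul_eq_div, le_div_iff₀ hΔ0, ← abs_mul, ← hQ,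
    integral_add_measure (aux_integrable_poly σ hmσ P).abs (aux_integrable_poly τ hmτ P).abs]
  have e : ∀ (μ : Measure ℝ), (∀ᵐ u ∂μ, 0 ≤ u) → (∀ m : ℕ, Integrable (fun t => t ^ m) μ) →
      |∫ u, P.eval u * ((1 + u)⁻¹) ^ (n + 1) ∂μ| ≤ ∫ u, |P.eval u| ∂μ := by
    intro μ hμ hm
    refine abs_integral_le_integral_abs.trans
      (integral_mono_ae (hint μ hμ hm P _).abs (aux_integrable_poly μ hm P).abs ?_)
    filter_upwards [hμ] with u hu using hbn P _ u hu
  exact (abs_sub _ _).trans (add_le_add (e σ hσ hmσ) (e τ hτ hmτ))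

/-- Functions on `K` dominated by a polynomial. -/
def auxE (K : Set ℝ) : Submodule ℝ (K → ℝ) where
  carrier := {f | ∃ p : Polynomial ℝ, ∀ u : K, |f u| ≤ p.eval (u : ℝ)}
  zero_mem' := ⟨0, fun u => by simp⟩
  add_mem' := by
    rintro f g ⟨p, hp⟩ ⟨q, hq⟩
    refine ⟨p + q, fun u => ?_⟩
    rw [Polynomial.eval_add]
    exact (abs_add_le _ _).trans (add_le_add (hp u) (hq u))
  smul_mem' := by
    rintro c f ⟨p, hp⟩
    refine ⟨Polynomial.C |c| * p, fun u => ?_⟩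
    simp only [Pi.smul_apply, smul_eq_mul, abs_mul, Polynomial.eval_mul, Polynomial.eval_C]
    exact mul_le_mul_of_nonneg_left (hp u) (abs_nonneg _)

lemma auxE_mem_poly (K : Set ℝ) (p : Polynomial ℝ) : (fun u : K => p.eval (u : ℝ)) ∈ auxE K := by
  refine ⟨p ^ 2 + 1, fun u => ?_⟩
  simp only [Polynomial.eval_add, Polynomial.eval_pow, Polynomial.eval_one]
  rw [abs_le]; constructor <;> nlinarith [sq_nonneg (p.eval (u : ℝ) - 1), sq_nonneg (p.eval (u : ℝ) + 1)]

/-- Polynomials inside `auxE K`. -/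
def auxPoly (K : Set ℝ) : Polynomial ℝ →ₗ[ℝ] auxE K where
  toFun p := ⟨fun u => p.eval (u : ℝ), auxE_mem_poly K p⟩
  map_add' p q := by ext u; simp
  map_smul' c p := by ext u; simp

lemma auxPoly_inj (K : Set ℝ) (hK : K.Infinite) : Function.Injective (auxPoly K) := by
  intro p q h
  refine Polynomial.eq_of_infinite_eval_eq p q (hK.mono fun u hu => ?_)
  exact congrFun (congrArg Subtype.val h) ⟨u, hu⟩

/-- Pointwise nonnegative functions. -/
def auxCone (K : Set ℝ) : PointedCone ℝ (auxE K) where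
  carrier := {f | ∀ u, 0 ≤ f.1 u}
  zero_mem' := fun u => le_rfl
  add_mem' := fun {f g} hf hg u => add_nonneg (hf u) (hg u)
  smul_mem' := fun c f hf u => mul_nonneg c.2 (hf u)

lemma aux_extend (K : Set ℝ) (hK : K.Infinite) (M : Polynomial ℝ →ₗ[ℝ] ℝ)
    (hM : ∀ p : Polynomial ℝ, (∀ u ∈ K, 0 ≤ p.eval u) → 0 ≤ M p) :
    ∃ g : auxE K →ₗ[ℝ] ℝ, (∀ p, g (auxPoly K p) = M p) ∧
      ∀ f : auxE K, (∀ u, 0 ≤ f.1 u) → 0 ≤ g f := by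
  let e := LinearEquiv.ofInjective (auxPoly K) (auxPoly_inj K hK)
  let f : auxE K →ₗ.[ℝ] ℝ := ⟨LinearMap.range (auxPoly K), M ∘ₗ e.symm.toLinearMap⟩
  have hf : ∀ p : Polynomial ℝ, f ⟨auxPoly K p, ⟨p, rfl⟩⟩ = M p := by
    intro p
    change M (e.symm (⟨auxPoly K p, ⟨p, rfl⟩⟩)) = M p
    congr 1
    rw [LinearEquiv.symm_apply_eq]
    rfl
  have hn : ∀ x : f.domain, (x : auxE K) ∈ auxCone K → 0 ≤ f x := by
    rintro ⟨_, ⟨p, rfl⟩⟩ hx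
    rw [hf]
    exact hM p fun u hu => hx ⟨u, hu⟩
  have hd : ∀ y : auxE K, ∃ x : f.domain, (x : auxE K) + y ∈ auxCone K := by
    rintro ⟨y, p, hp⟩
    refine ⟨⟨auxPoly K p, ⟨p, rfl⟩⟩, fun u => ?_⟩
    have h1 := hp u
    have h2 := neg_abs_le (y u)
    change 0 ≤ p.eval (u : ℝ) + y u
    linarith
  obtain ⟨g, hg1, hg2⟩ := riesz_extension (auxCone K) f hn hd
  refine ⟨g, fun p => ?_, fun x hx => hg2 x hx⟩
  rw [← hf p]
  exact hg1 ⟨auxPoly K p, ⟨p, rfl⟩⟩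

/-- Cutoff function. -/
def auxChi (n : ℕ) (u : ℝ) : ℝ := max 0 (min 1 ((n : ℝ) + 1 - |u|))

lemma auxChi_cont (n : ℕ) : Continuous (auxChi n) := by unfold auxChi; fun_prop

lemma auxChi_nonneg (n : ℕ) (u : ℝ) : 0 ≤ auxChi n u := le_max_left _ _

lemma auxChi_le_one (n : ℕ) (u : ℝ) : auxChi n u ≤ 1 :=
  max_le zero_le_one (min_le_left _ _)

lemma auxChi_eq_one (n : ℕ) (u : ℝ) (h : |u| ≤ n) : auxChi n u = 1 := by
  unfold auxChi
  rw [min_eq_left (by linarith), max_eq_right zero_le_one]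

lemma auxChi_eq_zero (n : ℕ) (u : ℝ) (h : (n : ℝ) + 1 ≤ |u|) : auxChi n u = 0 := by
  unfold auxChi
  rw [max_eq_left]
  exact (min_le_right _ _).trans (by linarith)

lemma auxChi_mono (u : ℝ) : Monotone (fun n => auxChi n u) := by
  intro a b hab
  have : (a : ℝ) ≤ b := by exact_mod_cast hab
  unfold auxChi
  exact max_le_max le_rfl (min_le_min le_rfl (by linarith))

open CompactlySupported in
/-- Haviland's theorem for closed infinite subsets of the line (for the powers being nonnegative). -/
lemma aux_haviland (K : Set ℝ) (hKc : IsClosed K) (hK : K.Infinite) (M : Polynomial ℝ →ₗ[ℝ] ℝ)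
    (hM : ∀ p : Polynomial ℝ, (∀ u ∈ K, 0 ≤ p.eval u) → 0 ≤ M p) :
    ∃ ρ : Measure ℝ, ρ Kᶜ = 0 ∧ ∀ q : Polynomial ℝ, (∀ u ∈ K, 0 ≤ q.eval u) →
      Integrable (fun u => q.eval u) ρ ∧ ∫ u, q.eval u ∂ρ = M q := by
  obtain ⟨g, hg1, hg2⟩ := aux_extend K hK M hM
  have hgmono : ∀ f₁ f₂ : auxE K, (∀ u, f₁.1 u ≤ f₂.1 u) → g f₁ ≤ g f₂ := by
    intro f₁ f₂ h
    have := hg2 (f₂ - f₁) (fun u => sub_nonneg.mpr (h u))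
    rw [map_sub] at this
    linarith
  have : LocallyCompactSpace K := hKc.isClosedEmbedding_subtypeVal.locallyCompactSpace
  have hmem : ∀ f : C_c(K, ℝ), (f : K → ℝ) ∈ auxE K := by
    intro f
    obtain ⟨B, hB⟩ := f.hasCompactSupport.exists_bound_of_continuous f.continuous
    exact ⟨Polynomial.C B, fun u => by simpa using hB u⟩
  let Λ₀ : C_c(K, ℝ) →ₗ[ℝ] ℝ :=
    { toFun := fun f => g ⟨f, hmem f⟩
      map_add' := fun f h => by rw [← map_add]; rfl
      map_smul' := fun c f => by rw [RingHom.id_apply, ← map_smul]; rfl }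
  let Λ : C_c(K, ℝ) →ₚ[ℝ] ℝ := PositiveLinearMap.mk₀ Λ₀ (fun f hf => hg2 _ (fun u => hf u))
  set ρ' := RealRMK.rieszMeasure Λ with hρ'
  have hΛ : ∀ f : C_c(K, ℝ), ∫ u, f u ∂ρ' = g ⟨f, hmem f⟩ := fun f =>
    RealRMK.integral_rieszMeasure Λ f
  have hemb : MeasurableEmbedding (Subtype.val : K → ℝ) :=
    MeasurableEmbedding.subtype_coe hKc.measurableSet
  refine ⟨ρ'.map Subtype.val, ?_, ?_⟩
  · rw [hemb.map_apply]
    convert measure_empty (μ := ρ')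
    ext u; simp
  intro q hq
  rw [hemb.integrable_map_iff, hemb.integral_map]
  -- the truncations
  have hcs : ∀ n : ℕ, HasCompactSupport (fun u : K => auxChi n u * q.eval (u : ℝ)) := by
    intro n
    have hc : IsCompact ((Subtype.val : K → ℝ) ⁻¹' (Set.Icc (-((n : ℝ) + 1)) (n + 1))) :=
      hKc.isClosedEmbedding_subtypeVal.isCompact_preimage isCompact_Icc
    refine HasCompactSupport.intro hc fun u hu => ?_
    have : (n : ℝ) + 1 ≤ |(u : ℝ)| := by
      by_contra hcon
      exact hu (abs_le.mp (not_le.mp hcon).le)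
    rw [auxChi_eq_zero n u this, zero_mul]
  let T : ℕ → C_c(K, ℝ) := fun n =>
    ⟨⟨fun u : K => auxChi n u * q.eval (u : ℝ),
      ((auxChi_cont n).comp continuous_subtype_val).mul
        (q.continuous.comp continuous_subtype_val)⟩, hcs n⟩
  have hT : ∀ n (u : K), T n u = auxChi n u * q.eval (u : ℝ) := fun n u => rfl
  have hqn : ∀ u : K, 0 ≤ q.eval (u : ℝ) := fun u => hq u u.2
  have hTn : ∀ n u, 0 ≤ T n u := fun n u => mul_nonneg (auxChi_nonneg _ _) (hqn u)
  have hup : ∀ n, ∫ u, T n u ∂ρ' ≤ M q := by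
    intro n
    rw [hΛ, ← hg1]
    exact hgmono _ _ fun u => mul_le_of_le_one_left (hqn u) (auxChi_le_one _ _)
  have hlow : ∀ n : ℕ, M q - (((n : ℝ) + 1) ^ 2)⁻¹ * M (q * Polynomial.X ^ 2) ≤
      ∫ u, T (n + 1) u ∂ρ' := by
    intro n
    rw [hΛ, ← hg1, ← hg1, ← smul_eq_mul, ← map_smul, ← map_sub]
    refine hgmono _ _ fun u => ?_
    change q.eval (u : ℝ) - (((n : ℝ) + 1) ^ 2)⁻¹ * (q * Polynomial.X ^ 2).eval (u : ℝ) ≤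
      auxChi (n + 1) u * q.eval (u : ℝ)
    simp only [Polynomial.eval_mul, Polynomial.eval_pow, Polynomial.eval_X]
    rcases le_or_gt |(u : ℝ)| ((n + 1 : ℕ) : ℝ) with h | h
    · rw [auxChi_eq_one _ _ h]
      have : 0 ≤ (((n : ℝ) + 1) ^ 2)⁻¹ * (q.eval (u : ℝ) * (u : ℝ) ^ 2) := by
        have := hqn u
        positivity
      linarith
    · have h1 : ((n : ℝ) + 1) ^ 2 ≤ (u : ℝ) ^ 2 := by
        rw [← sq_abs (u : ℝ)]
        push_cast at h
        exact pow_le_pow_left₀ (by positivity) h.le 2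
      have h2 : 1 ≤ (((n : ℝ) + 1) ^ 2)⁻¹ * (u : ℝ) ^ 2 := by
        rw [inv_mul_eq_div, one_le_div (by positivity)]; exact h1
      have h3 := mul_nonneg (auxChi_nonneg (n + 1) u) (hqn u)
      nlinarith [hqn u]
  have hlim : Filter.Tendsto (fun n : ℕ => ∫ u, T (n + 1) u ∂ρ') Filter.atTop (nhds (M q)) := by
    refine tendsto_of_tendsto_of_tendsto_of_le_of_le ?_ tendsto_const_nhds hlow (fun n => hup (n + 1))
    have h1 : Filter.Tendsto (fun n : ℕ => (((n : ℝ) + 1) ^ 2)⁻¹) Filter.atTop (nhds 0) := by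
      refine Filter.Tendsto.comp tendsto_inv_atTop_zero ?_
      refine (Filter.tendsto_pow_atTop two_ne_zero).comp ?_
      exact Filter.tendsto_atTop_add_const_right _ _ tendsto_natCast_atTop_atTop
    simpa using (tendsto_const_nhds (x := M q)).sub (h1.mul_const (M (q * Polynomial.X ^ 2)))
  have hTint : ∀ n, Integrable (fun u => T n u) ρ' := fun n =>
    (T n).continuous.integrable_of_hasCompactSupport (T n).hasCompactSupport
  have hmct : Filter.Tendsto (fun n : ℕ => ∫⁻ u, ENNReal.ofReal (T (n + 1) u) ∂ρ') Filter.atTop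
      (nhds (∫⁻ u : K, ENNReal.ofReal (q.eval (u : ℝ)) ∂ρ')) := by
    refine lintegral_tendsto_of_tendsto_of_monotone ?_ ?_ ?_
    · intro n
      exact ((T (n + 1)).continuous.measurable.ennreal_ofReal).aemeasurable
    · filter_upwards with u
      intro a b hab
      refine ENNReal.ofReal_le_ofReal (mul_le_mul_of_nonneg_right ?_ (hqn u))
      exact auxChi_mono u (by omega)
    · filter_upwards with u
      refine tendsto_const_nhds.congr' ?_
      obtain ⟨N, hN⟩ := exists_nat_ge |(u : ℝ)|
      filter_upwards [Filter.eventually_ge_atTop N] with n hn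
      rw [hT, auxChi_eq_one, one_mul]
      refine hN.trans ?_
      exact_mod_cast hn.trans (Nat.le_succ n)
  have hval : ∫⁻ u : K, ENNReal.ofReal (q.eval (u : ℝ)) ∂ρ' = ENNReal.ofReal (M q) := by
    refine tendsto_nhds_unique hmct ?_
    have := (ENNReal.continuous_ofReal.tendsto (M q)).comp hlim
    refine this.congr fun n => ?_
    exact ofReal_integral_eq_lintegral_ofReal (hTint _) (Filter.Eventually.of_forall (hTn _))
  have hmeas : AEStronglyMeasurable (fun u : K => q.eval (u : ℝ)) ρ' :=
    (q.continuous.comp continuous_subtype_val).measurable.aestronglyMeasurable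
  constructor
  · refine ⟨hmeas, ?_⟩
    change HasFiniteIntegral (fun u : K => q.eval (u : ℝ)) ρ'
    rw [hasFiniteIntegral_iff_ofReal (Filter.Eventually.of_forall hqn), hval]
    exact ENNReal.ofReal_lt_top
  · rw [integral_eq_lintegral_of_nonneg_ae (Filter.Eventually.of_forall hqn) hmeas, hval,
      ENNReal.toReal_ofReal (hM q hq)]

lemma aux_finite (μ : Measure ℝ) (h : Integrable (fun t : ℝ => t ^ 0) μ) : IsFiniteMeasure μ := by
  simp only [pow_zero] at h
  exact (integrable_const_iff_isFiniteMeasure one_ne_zero).mp h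

lemma aux_ae_nonneg (μ : Measure ℝ) (h : μ (Set.Iio 0) = 0) : ∀ᵐ u ∂μ, 0 ≤ u := by
  rw [ae_iff]; convert h using 2; ext; simp

/-- For every `s` in a nondegenerate interval there is a good solution having an atom at `s`. -/
lemma aux_main (ν : Measure ℝ) (hpos : ν (Set.Iio 0) = 0)
    (hmom : ∀ m : ℕ, Integrable (fun t => t ^ m) ν)
    (hindet : ¬ StieltjesDeterminate ν) :
    ∃ ε : ℝ, ε < 1 ∧ ∀ s ∈ Set.Icc ε 1, ∃ σ : Measure ℝ, σ ∈ WSti ν ∧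
      (∀ k : ℕ, (∫⁻ u, ((ENNReal.ofReal u) ^ k)⁻¹ ∂σ) < ⊤) ∧ 0 < σ {s} := by
  unfold StieltjesDeterminate at hindet
  push Not at hindet
  obtain ⟨τ, ⟨hτ0, hτm, hτeq⟩, hne⟩ := hindet
  have := aux_finite ν (hmom 0)
  have := aux_finite τ (hτm 0)
  obtain ⟨K, hK, hB⟩ := aux_eval τ ν (aux_ae_nonneg τ hτ0) (aux_ae_nonneg ν hpos) hτm hmom hτeq hne
  have hm2 : ∀ m : ℕ, Integrable (fun t => t ^ m) (τ + ν) := fun m => (hτm m).add_measure (hmom m)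
  obtain ⟨ε, δ, hε, hε1, hδ, hP⟩ := aux_pos (τ + ν) (by simp [hτ0, hpos]) hm2 K hK hB
  refine ⟨ε, hε1, fun s hs => ?_⟩
  let M : Polynomial ℝ →ₗ[ℝ] ℝ :=
    { toFun := fun p => (1 / 2) * (∫ u, p.eval u ∂(τ + ν)) - δ * p.eval s
      map_add' := fun p q => by
        simp only [Polynomial.eval_add]
        rw [integral_add (aux_integrable_poly _ hm2 p) (aux_integrable_poly _ hm2 q)]
        ring
      map_smul' := fun c p => by
        simp only [Polynomial.eval_smul, smul_eq_mul, RingHom.id_apply]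
        rw [integral_const_mul]
        ring }
  obtain ⟨ρ, hρ0, hρ⟩ := aux_haviland (Set.Ici ε) isClosed_Ici (Set.Ici_infinite ε) M
    (fun p hp => hP s hs p hp)
  have hρm : ∀ m : ℕ, Integrable (fun t : ℝ => t ^ m) ρ ∧ ∫ t, t ^ m ∂ρ = M (Polynomial.X ^ m) := by
    intro m
    have := hρ (Polynomial.X ^ m) (fun u hu => by
      simpa using pow_nonneg (hε.le.trans hu) m)
    simpa using this
  have hs0 : 0 < s := hε.trans_le hs.1
  have hfin := aux_finite ρ (hρm 0).1
  set σ : Measure ℝ := ρ + ENNReal.ofReal δ • Measure.dirac s with hσ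
  have hdm : ∀ m : ℕ, Integrable (fun t : ℝ => t ^ m) (ENNReal.ofReal δ • Measure.dirac s) := by
    intro m
    exact (integrable_dirac (by simp)).smul_measure ENNReal.ofReal_ne_top
  have hσc : σ (Set.Iio ε) = 0 := by
    have h1 : ρ (Set.Iio ε) = 0 := by simpa using hρ0
    have h2 : ¬ s < ε := not_lt.mpr hs.1
    simp [hσ, h1, h2]
  refine ⟨σ, ⟨?_, ?_, ?_⟩, ?_, ?_⟩
  · exact measure_mono_null (Set.Iio_subset_Iio hε.le) hσc
  · intro m
    exact (hρm m).1.add_measure (hdm m)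
  · intro m
    rw [hσ, integral_add_measure (hρm m).1 (hdm m), (hρm m).2, integral_smul_measure,
      integral_dirac, ENNReal.toReal_ofReal hδ.le]
    change (1 / 2) * (∫ u, (Polynomial.X ^ m : Polynomial ℝ).eval u ∂(τ + ν)) -
      δ * (Polynomial.X ^ m : Polynomial ℝ).eval s + δ • s ^ m = _
    simp only [Polynomial.eval_pow, Polynomial.eval_X, smul_eq_mul]
    rw [integral_add_measure (hτm m) (hmom m), hτeq m]
    ring
  · intro k
    have hae : ∀ᵐ u ∂σ, ε ≤ u := by
      rw [ae_iff]; convert hσc using 2; ext; simp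
    have hσf : IsFiniteMeasure σ := aux_finite σ ((hρm 0).1.add_measure (hdm 0))
    calc ∫⁻ u, ((ENNReal.ofReal u) ^ k)⁻¹ ∂σ ≤ ∫⁻ _, ((ENNReal.ofReal ε) ^ k)⁻¹ ∂σ := by
          refine lintegral_mono_ae ?_
          filter_upwards [hae] with u hu
          exact ENNReal.inv_le_inv.mpr (pow_le_pow_left₀ (zero_le) (ENNReal.ofReal_le_ofReal hu) k)
      _ < ⊤ := by
          rw [lintegral_const]
          refine ENNReal.mul_lt_top ?_ (measure_lt_top σ _)
          rw [ENNReal.inv_lt_top]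
          exact ENNReal.pow_pos (ENNReal.ofReal_pos.mpr hε) k
  · have : 0 < ENNReal.ofReal δ := ENNReal.ofReal_pos.mpr hδ
    simp [hσ, hδ]

theorem statement12 (ν : Measure ℝ) (hpos : ν (Set.Iio 0) = 0)
    (hmom : ∀ m : ℕ, Integrable (fun t => t ^ m) ν)
    (hindet : ¬ StieltjesDeterminate ν) :
    ∃ S : Set (Measure ℝ), ¬ S.Countable ∧
      ∀ σ ∈ S, σ ∈ WSti ν ∧ ∀ k : ℕ, (∫⁻ u, ((ENNReal.ofReal u) ^ k)⁻¹ ∂σ) < ⊤ := by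
  refine ⟨{σ | σ ∈ WSti ν ∧ ∀ k : ℕ, (∫⁻ u, ((ENNReal.ofReal u) ^ k)⁻¹ ∂σ) < ⊤}, ?_, fun σ h => h⟩
  intro hc
  obtain ⟨ε, hε1, h⟩ := aux_main ν hpos hmom hindet
  have hcount := hc.biUnion (t := fun σ _ => {s : ℝ | 0 < σ {s}}) (fun σ hσ => by
    have := aux_finite σ (hσ.1.2.1 0)
    exact Measure.countable_meas_level_set_pos (μ := σ) (g := id) measurable_id)
  have hsub : Set.Icc ε 1 ⊆ ⋃ σ ∈ {σ | σ ∈ WSti ν ∧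
      ∀ k : ℕ, (∫⁻ u, ((ENNReal.ofReal u) ^ k)⁻¹ ∂σ) < ⊤}, {s : ℝ | 0 < σ {s}} := by
    intro s hs
    obtain ⟨σ, h1, h2, h3⟩ := h s hs
    exact Set.mem_biUnion (show σ ∈ {σ | σ ∈ WSti ν ∧
      ∀ k : ℕ, (∫⁻ u, ((ENNReal.ofReal u) ^ k)⁻¹ ∂σ) < ⊤} from ⟨h1, h2⟩) h3
  have h1 := hcount.mono hsub
  rw [← Cardinal.le_aleph0_iff_set_countable, Cardinal.mk_Icc_real hε1] at h1
  exact absurd h1 (not_le.mpr Cardinal.aleph0_lt_continuum)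
end
end
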